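/- Assume the sub-critical range q > 1 and (2/3)q + 1 < p < q + 2/3, and set W := W^{(3p−2)/q−1,q}(ℝ/ℤ,ℝⁿ). The set U of injective regular curves in W is open in W, the functional E_{p,q} is Gâteaux differentiable at every γ ∈ U with differential δE_{p,q}(γ;·) a bounded linear functional on W, and the map U → W*, γ ↦ δE_{p,q}(γ;·), is continuous; in other words, E_{p,q} is continuously differentiable on the subspace of all regular embedded W-curves. -/

import Mathlib

open MeasureTheory Set Filter Topology
open scoped ENNReal

noncomputable section

/-- The area `|a ∧ b|` of the parallelogram spanned by `a, b ∈ ℝⁿ`. -/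
def wedgeNorm {n : ℕ} (a b : EuclideanSpace ℝ (Fin n)) : ℝ :=
  Real.sqrt (‖a‖ ^ 2 * ‖b‖ ^ 2 - (inner ℝ a b : ℝ) ^ 2)

/-- `1 / R^{p,q}(x,y,z) = |(y-x) ∧ (z-x)|^q / (|y-z| |y-x| |z-x|)^p`. -/
def invR {n : ℕ} (p q : ℝ) (x y z : EuclideanSpace ℝ (Fin n)) : ℝ :=
  wedgeNorm (y - x) (z - x) ^ q / (‖y - z‖ * ‖y - x‖ * ‖z - x‖) ^ p

/-- The generalized integral Menger curvature `E_{p,q}` of a closed curve,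
modelled by a `1`-periodic function together with its derivative,
the parameter domain `ℝ/ℤ` being represented by `[0,1)`; values in `[0,∞]`. -/
def menger {n : ℕ} (p q : ℝ) (γ γ' : ℝ → EuclideanSpace ℝ (Fin n)) : ℝ≥0∞ :=
  ∫⁻ u₁ in Ico (0:ℝ) 1, ∫⁻ u₂ in Ico (0:ℝ) 1, ∫⁻ u₃ in Ico (0:ℝ) 1,
    ENNReal.ofReal (‖γ' u₁‖ * ‖γ' u₂‖ * ‖γ' u₃‖ * invR p q (γ u₁) (γ u₂) (γ u₃))

/-- Injectivity of a `1`-periodic curve as a map on `ℝ/ℤ`. -/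
def InjCircle {n : ℕ} (γ : ℝ → EuclideanSpace ℝ (Fin n)) : Prop :=
  ∀ u v : ℝ, γ u = γ v → ∃ k : ℤ, v = u + k

/-- Distance on `ℝ/ℤ`. -/
def circleDist (u v : ℝ) : ℝ := ⨅ k : ℤ, |u - v - (k : ℝ)|

/-- The `ρ`-th power of the Sobolev–Slobodeckiĭ seminorm `[f]_{W^{1+s,ρ}}`
of a periodic function with derivative `f'`; values in `[0,∞]`. -/
def sobSemiPow {n : ℕ} (s ρ : ℝ) (f' : ℝ → EuclideanSpace ℝ (Fin n)) : ℝ≥0∞ :=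
  ∫⁻ u in Ico (0:ℝ) 1, ∫⁻ w in Icc (-(1/2) : ℝ) (1/2),
    ENNReal.ofReal (‖f' (u + w) - f' u‖ ^ ρ / |w| ^ (1 + ρ * s))

/-- The norm `‖f‖_{W^{1+s,ρ}} = ‖f‖_{W^{1,ρ}} + [f]_{W^{1+s,ρ}}`. -/
def sobNorm {n : ℕ} (s ρ : ℝ) (f f' : ℝ → EuclideanSpace ℝ (Fin n)) : ℝ :=
  (∫ u in Ico (0:ℝ) 1, ‖f u‖ ^ ρ) ^ (1/ρ) + (∫ u in Ico (0:ℝ) 1, ‖f' u‖ ^ ρ) ^ (1/ρ)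
    + (sobSemiPow s ρ f').toReal ^ (1/ρ)

/-- `γ` is a closed `W^{1,1}` curve with weak derivative `γ'`:
both are `1`-periodic, `γ'` is measurable and `γ` is the primitive of `γ'`. -/
structure CurvePair {n : ℕ} (γ γ' : ℝ → EuclideanSpace ℝ (Fin n)) : Prop where
  periodic : Function.Periodic γ 1
  periodic' : Function.Periodic γ' 1
  meas' : Measurable γ'
  primitive : ∀ u, γ u = γ 0 + ∫ t in (0:ℝ)..u, γ' t

/-- Membership in the energy space `W^{1+s,ρ}(ℝ/ℤ,ℝⁿ)` of a curve with
(weak) derivative `f'`. -/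
def InW {n : ℕ} (s ρ : ℝ) (f f' : ℝ → EuclideanSpace ℝ (Fin n)) : Prop :=
  CurvePair f f' ∧ sobSemiPow s ρ f' < ⊤

/-- The set `U` of injective (embedded) regular curves in `W^{1+s,ρ}`. -/
def InU {n : ℕ} (s ρ : ℝ) (f f' : ℝ → EuclideanSpace ℝ (Fin n)) : Prop :=
  InW s ρ f f' ∧ InjCircle f ∧ ∃ c : ℝ, 0 < c ∧ ∀ᵐ u : ℝ, c ≤ ‖f' u‖

/-!
The integrand is symmetric in the three points, so the energy is an integral over configurations
of a point `u` of the circle and two arcs `[u - b, u]`, `[u, u + a]` whose union avoids a longest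
of the three arcs; then all chords involved span at most two thirds of the circle. On such
configurations the integrand is `G(ξ, κ)`, where `ξ` (the *frame*) collects the velocities at the
three points and the three difference quotients of the curve, `κ` is the difference of the two
difference quotients at `u` times a power of `a`, `b` and `a + b`, and `G` is `C¹` away from
vanishing `ξ i` and positively homogeneous of degree `q` in `κ`.

Both `ξ` and `κ` are linear in the curve. Since `q` times the exponent `s = (3p - 2) / q - 2`
exceeds `1`, the space `W` embeds into the Lipschitz functions, so `W → L^∞`, `γ ↦ ξ`, is bounded,
and since `p < q + 2 / 3` the map `W → L^q`, `γ ↦ κ`, is bounded as well. Near an injective regular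
curve the chords are uniformly bounded from below by the arcs, so the frames stay in a compact set
of tuples of nonzero vectors. There `(ξ, κ) ↦ ∫ G(ξ, κ)` is `C¹` on `L^∞ × L^q`, because
homogeneity bounds `DG(ξ, κ)(α, β)` by a multiple of `‖κ‖ ^ q ‖α‖ + ‖κ‖ ^ (q - 1) ‖β‖`.
-/

section GrowthWeight

/-- The bound `k ^ q * α + k ^ (q - 1) * β` for the derivative, in a direction of size `(α, β)`, of
a function of two variables that is positively homogeneous of degree `q` in the second one, at a
point whose second variable has size `k`. It is used with pointwise norms as well as with `L^q` and
`L^∞` norms. -/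
def growthWeight (q k α β : ℝ) : ℝ := k ^ q * α + k ^ (q - 1) * β

variable {q k l α β : ℝ}

theorem growthWeight_nonneg (q : ℝ) (hk : 0 ≤ k) (hα : 0 ≤ α) (hβ : 0 ≤ β) :
    0 ≤ growthWeight q k α β := by
  unfold growthWeight; positivity

theorem growthWeight_zero (hq : 1 < q) (α β : ℝ) : growthWeight q 0 α β = 0 := by
  simp [growthWeight, Real.zero_rpow (by linarith : q ≠ 0),
    Real.zero_rpow (by linarith : q - 1 ≠ 0)]

theorem continuous_growthWeight (hq : 1 < q) (α β : ℝ) :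
    Continuous fun k => growthWeight q k α β := by
  have hpow : ∀ r : ℝ, 0 ≤ r → Continuous fun k : ℝ => k ^ r :=
    fun r hr => continuous_id.rpow_const fun _ => Or.inr hr
  exact ((hpow q (by linarith)).mul_const α).add ((hpow (q - 1) (by linarith)).mul_const β)

theorem growthWeight_mono_left (hq : 1 ≤ q) (hk : 0 ≤ k) (hkl : k ≤ l) (hα : 0 ≤ α)
    (hβ : 0 ≤ β) : growthWeight q k α β ≤ growthWeight q l α β := by
  have : 0 ≤ q - 1 := by linarith
  unfold growthWeight
  gcongr

theorem growthWeight_le_mul_add (hk : 0 ≤ k) (hα : 0 ≤ α) (hβ : 0 ≤ β) :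
    growthWeight q k α β ≤ growthWeight q k 1 1 * (α + β) := by
  have hcross₁ : 0 ≤ k ^ q * β := by positivity
  have hcross₂ : 0 ≤ k ^ (q - 1) * α := by positivity
  unfold growthWeight
  linarith

theorem growthWeight_mul_left_le {B : ℝ} (hB : 0 ≤ B) (hk : 0 ≤ k) (hα : 0 ≤ α) (hβ : 0 ≤ β) :
    growthWeight q (B * k) α β ≤ (B ^ q + B ^ (q - 1)) * growthWeight q k α β := by
  have hcross₁ : 0 ≤ B ^ q * (k ^ (q - 1) * β) := by positivity
  have hcross₂ : 0 ≤ B ^ (q - 1) * (k ^ q * α) := by positivity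
  rw [growthWeight, growthWeight, Real.mul_rpow hB hk, Real.mul_rpow hB hk]
  linarith

theorem rpow_mul_add_inv_mul {t : ℝ} (ht : 0 < t) (α β : ℝ) :
    t ^ q * (α + t⁻¹ * β) = growthWeight q t α β := by
  rw [growthWeight, Real.rpow_sub_one ht.ne']
  ring

end GrowthWeight

section Homogeneous

variable {Z V : Type*} [NormedAddCommGroup Z] [NormedSpace ℝ Z]
  [NormedAddCommGroup V] [NormedSpace ℝ V]

theorem rpow_mul_abs_apply_le (L : Z × V →L[ℝ] ℝ) {q t : ℝ} (ht : 0 < t) (a : Z) (b : V) :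
    t ^ q * |L (a, t⁻¹ • b)| ≤ ‖L‖ * growthWeight q t ‖a‖ ‖b‖ := by
  have hdir : ‖(a, t⁻¹ • b)‖ ≤ ‖a‖ + t⁻¹ * ‖b‖ := by
    rw [Prod.norm_mk, norm_smul, norm_inv, Real.norm_of_nonneg ht.le]
    exact max_le_add_of_nonneg (norm_nonneg _) (by positivity)
  calc t ^ q * |L (a, t⁻¹ • b)| ≤ t ^ q * (‖L‖ * (‖a‖ + t⁻¹ * ‖b‖)) := by
        gcongr
        exact (L.le_opNorm _).trans (by gcongr)
    _ = ‖L‖ * growthWeight q t ‖a‖ ‖b‖ := by rw [← rpow_mul_add_inv_mul ht]; ring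

/-- An integrand `G(ξ, κ)` that is continuously differentiable on `Ω × V` and positively homogeneous
of degree `q` in `κ`. The functional `(ξ, κ) ↦ ∫ G(ξ, κ)` is then continuously differentiable where
`ξ` is bounded and stays away from the complement of `Ω`, and `κ` is in `L^q`. -/
structure HomogeneousIntegrand (q : ℝ) (Ω : Set Z) (G : Z × V → ℝ) : Prop where
  isOpen : IsOpen Ω
  contDiffOn : ContDiffOn ℝ 1 G (Ω ×ˢ univ)
  map_smul : ∀ t : ℝ, 0 < t → ∀ ξ ∈ Ω, ∀ κ, G (ξ, t • κ) = t ^ q * G (ξ, κ)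

namespace HomogeneousIntegrand

variable {q : ℝ} {Ω K : Set Z} {G : Z × V → ℝ} {ξ : Z}

theorem differentiableAt (hG : HomogeneousIntegrand q Ω G) (hξ : ξ ∈ Ω) (κ : V) :
    DifferentiableAt ℝ G (ξ, κ) :=
  (hG.contDiffOn.differentiableOn one_ne_zero).differentiableAt
    ((hG.isOpen.prod isOpen_univ).mem_nhds ⟨hξ, mem_univ κ⟩)

theorem continuousOn_fderiv (hG : HomogeneousIntegrand q Ω G) :
    ContinuousOn (fderiv ℝ G) (Ω ×ˢ univ) :=
  hG.contDiffOn.continuousOn_fderiv_of_isOpen (hG.isOpen.prod isOpen_univ) le_rfl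

theorem apply_zero (hG : HomogeneousIntegrand q Ω G) (hq : 0 < q) (hξ : ξ ∈ Ω) :
    G (ξ, 0) = 0 := by
  have h := hG.map_smul 2 two_pos ξ hξ 0
  have h2 : (1 : ℝ) < 2 ^ q := Real.one_lt_rpow one_lt_two hq
  rw [smul_zero] at h
  exact (mul_eq_zero.1 (by linarith : (2 ^ q - 1) * G (ξ, 0) = 0)).resolve_left (by linarith)

theorem fderiv_apply_eq (hG : HomogeneousIntegrand q Ω G) (hξ : ξ ∈ Ω) {t : ℝ} (ht : 0 < t)
    (κ : V) (a : Z) (b : V) :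
    fderiv ℝ G (ξ, κ) (a, b) = t ^ q * fderiv ℝ G (ξ, t⁻¹ • κ) (a, t⁻¹ • b) := by
  have hscale : HasFDerivAt (fun z : Z × V => ((z.1, t⁻¹ • z.2) : Z × V))
      ((ContinuousLinearMap.fst ℝ Z V).prod (t⁻¹ • ContinuousLinearMap.snd ℝ Z V)) (ξ, κ) :=
    ((ContinuousLinearMap.fst ℝ Z V).prod (t⁻¹ • ContinuousLinearMap.snd ℝ Z V)).hasFDerivAt
  have hcomp : HasFDerivAt (fun z : Z × V => t ^ q * G (z.1, t⁻¹ • z.2)) _ (ξ, κ) :=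
    ((hG.differentiableAt hξ (t⁻¹ • κ)).hasFDerivAt.comp (ξ, κ) hscale).const_mul (t ^ q)
  have hlocal : G =ᶠ[𝓝 (ξ, κ)] fun z => t ^ q * G (z.1, t⁻¹ • z.2) := by
    filter_upwards [(hG.isOpen.prod isOpen_univ).mem_nhds ⟨hξ, mem_univ κ⟩] with z hz
    rw [← hG.map_smul t ht z.1 hz.1, smul_inv_smul₀ ht.ne']
  rw [(hcomp.congr_of_eventuallyEq hlocal).fderiv]
  simp

theorem fderiv_zero (hG : HomogeneousIntegrand q Ω G) (hq : 1 < q) (hξ : ξ ∈ Ω) :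
    fderiv ℝ G (ξ, 0) = 0 := by
  refine ContinuousLinearMap.ext fun ⟨a, b⟩ => ?_
  set L := fderiv ℝ G (ξ, 0)
  have hbound : ∀ t : ℝ, 0 < t → |L (a, b)| ≤ ‖L‖ * growthWeight q t ‖a‖ ‖b‖ := fun t ht => by
    refine le_trans (le_of_eq ?_) (rpow_mul_abs_apply_le L ht a b)
    rw [hG.fderiv_apply_eq hξ ht, smul_zero, abs_mul, abs_of_pos (Real.rpow_pos_of_pos ht q)]
  have hlim : Tendsto (fun t => ‖L‖ * growthWeight q t ‖a‖ ‖b‖) (𝓝[>] 0) (𝓝 0) := by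
    have h := ((continuous_growthWeight hq ‖a‖ ‖b‖).const_mul ‖L‖).tendsto 0
    rw [growthWeight_zero hq, mul_zero] at h
    exact h.mono_left nhdsWithin_le_nhds
  exact abs_nonpos_iff.1 (ge_of_tendsto hlim (eventually_mem_nhdsWithin.mono hbound))

theorem exists_abs_le [ProperSpace V] (hG : HomogeneousIntegrand q Ω G) (hq : 0 < q)
    (hK : IsCompact K) (hKΩ : K ⊆ Ω) : ∃ C, ∀ ξ ∈ K, ∀ κ, |G (ξ, κ)| ≤ C * ‖κ‖ ^ q := by
  obtain ⟨C, hC⟩ := (hK.prod (isCompact_closedBall (0 : V) 1)).exists_bound_of_continuousOn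
    (hG.contDiffOn.continuousOn.mono (prod_mono hKΩ (subset_univ _)))
  refine ⟨C, fun ξ hξ κ => ?_⟩
  rcases eq_or_ne κ 0 with rfl | hκ
  · simp [hG.apply_zero hq (hKΩ hξ), Real.zero_rpow hq.ne']
  have ht : 0 < ‖κ‖ := norm_pos_iff.2 hκ
  have hunit : (ξ, ‖κ‖⁻¹ • κ) ∈ K ×ˢ Metric.closedBall (0 : V) 1 :=
    ⟨hξ, by simp [norm_smul, ht.ne']⟩
  have hscale := hG.map_smul ‖κ‖ ht ξ (hKΩ hξ) (‖κ‖⁻¹ • κ)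
  rw [smul_inv_smul₀ ht.ne'] at hscale
  rw [hscale, abs_mul, abs_of_pos (Real.rpow_pos_of_pos ht q), mul_comm]
  gcongr
  exact hC _ hunit

theorem exists_abs_fderiv_le [ProperSpace V] (hG : HomogeneousIntegrand q Ω G) (hq : 1 < q)
    (hK : IsCompact K) (hKΩ : K ⊆ Ω) :
    ∃ C, 0 ≤ C ∧ ∀ ξ ∈ K, ∀ κ a b,
      |fderiv ℝ G (ξ, κ) (a, b)| ≤ C * growthWeight q ‖κ‖ ‖a‖ ‖b‖ := by
  obtain ⟨C, hC⟩ := (hK.prod (isCompact_closedBall (0 : V) 1)).exists_bound_of_continuousOn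
    (hG.continuousOn_fderiv.mono (prod_mono hKΩ (subset_univ _)))
  refine ⟨max C 0, le_max_right _ _, fun ξ hξ κ a b => ?_⟩
  have hw := growthWeight_nonneg q (norm_nonneg κ) (norm_nonneg a) (norm_nonneg b)
  rcases eq_or_ne κ 0 with rfl | hκ
  · rw [hG.fderiv_zero hq (hKΩ hξ), zero_apply, abs_zero]
    positivity
  have ht : 0 < ‖κ‖ := norm_pos_iff.2 hκ
  have hunit : (ξ, ‖κ‖⁻¹ • κ) ∈ K ×ˢ Metric.closedBall (0 : V) 1 :=
    ⟨hξ, by simp [norm_smul, ht.ne']⟩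
  rw [hG.fderiv_apply_eq (hKΩ hξ) ht, abs_mul, abs_of_pos (Real.rpow_pos_of_pos ht q)]
  refine (rpow_mul_abs_apply_le _ ht a b).trans ?_
  gcongr
  exact (hC _ hunit).trans (le_max_left _ _)

/-- Scaling to `‖κ‖ = 1`, this is the uniform continuity of `fderiv ℝ G` on a compact set. -/
theorem exists_abs_fderiv_sub_le_of_near [ProperSpace V] (hG : HomogeneousIntegrand q Ω G)
    (hq : 1 < q) (hK : IsCompact K) (hKΩ : K ⊆ Ω) {ε : ℝ} (hε : 0 < ε) :
    ∃ δ, 0 < δ ∧ ∀ ξ ∈ K, ∀ ξ' ∈ K, ‖ξ' - ξ‖ < δ → ∀ κ κ', ‖κ' - κ‖ ≤ δ * ‖κ‖ → ∀ a b,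
      |fderiv ℝ G (ξ', κ') (a, b) - fderiv ℝ G (ξ, κ) (a, b)| ≤
        ε * growthWeight q ‖κ‖ ‖a‖ ‖b‖ := by
  have hunif := (hK.prod (isCompact_closedBall (0 : V) 2)).uniformContinuousOn_of_continuous
    (hG.continuousOn_fderiv.mono (prod_mono hKΩ (subset_univ _)))
  obtain ⟨δ, hδ, hunif⟩ := Metric.uniformContinuousOn_iff.1 hunif ε hε
  refine ⟨min (δ / 2) 1, by positivity, fun ξ hξ ξ' hξ' hξξ' κ κ' hκκ' a b => ?_⟩
  rcases eq_or_ne κ 0 with rfl | hκ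
  · obtain rfl : κ' = 0 := by simpa using hκκ'
    rw [hG.fderiv_zero hq (hKΩ hξ), hG.fderiv_zero hq (hKΩ hξ'), norm_zero, growthWeight_zero hq]
    simp
  have ht : 0 < ‖κ‖ := norm_pos_iff.2 hκ
  have hclose : ‖‖κ‖⁻¹ • κ' - ‖κ‖⁻¹ • κ‖ ≤ min (δ / 2) 1 := by
    rw [← smul_sub, norm_smul, norm_inv, norm_norm, inv_mul_eq_div]
    exact (div_le_iff₀ ht).2 hκκ'
  have hone : ‖‖κ‖⁻¹ • κ‖ = 1 := by simp [norm_smul, ht.ne']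
  have hunit : ‖κ‖⁻¹ • κ ∈ Metric.closedBall (0 : V) 2 := by
    rw [mem_closedBall_zero_iff, hone]
    exact one_le_two
  have hunit' : ‖κ‖⁻¹ • κ' ∈ Metric.closedBall (0 : V) 2 := by
    rw [mem_closedBall_zero_iff]
    linarith [norm_le_norm_add_norm_sub (‖κ‖⁻¹ • κ) (‖κ‖⁻¹ • κ'), min_le_right (δ / 2) 1,
      norm_sub_rev (‖κ‖⁻¹ • κ) (‖κ‖⁻¹ • κ')]
  have hδ' : min (δ / 2) 1 < δ := (min_le_left _ _).trans_lt (half_lt_self hδ)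
  have hlt := hunif (ξ', _) ⟨hξ', hunit'⟩ (ξ, _) ⟨hξ, hunit⟩ (by
    rw [Prod.dist_eq, dist_eq_norm, dist_eq_norm]
    exact max_lt (hξξ'.trans hδ') (hclose.trans_lt hδ'))
  rw [hG.fderiv_apply_eq (hKΩ hξ) ht, hG.fderiv_apply_eq (hKΩ hξ') ht, ← mul_sub, abs_mul,
    abs_of_pos (Real.rpow_pos_of_pos ht q), ← sub_apply]
  refine (rpow_mul_abs_apply_le _ ht a b).trans ?_
  have hw := growthWeight_nonneg q (norm_nonneg κ) (norm_nonneg a) (norm_nonneg b)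
  gcongr
  exact (dist_eq_norm _ _).symm.trans_le hlt.le

/-- If `κ'` is not relatively close to `κ`, both derivatives are controlled by `‖κ' - κ‖`. -/
theorem exists_abs_fderiv_sub_le_of_far [ProperSpace V] (hG : HomogeneousIntegrand q Ω G)
    (hq : 1 < q) (hK : IsCompact K) (hKΩ : K ⊆ Ω) {δ : ℝ} (hδ : 0 < δ) :
    ∃ C, 0 ≤ C ∧ ∀ ξ ∈ K, ∀ ξ' ∈ K, ∀ κ κ', δ * ‖κ‖ ≤ ‖κ' - κ‖ → ∀ a b,
      |fderiv ℝ G (ξ', κ') (a, b) - fderiv ℝ G (ξ, κ) (a, b)| ≤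
        C * growthWeight q ‖κ' - κ‖ ‖a‖ ‖b‖ := by
  obtain ⟨C, hC0, hC⟩ := hG.exists_abs_fderiv_le hq hK hKΩ
  set B := 1 + δ⁻¹
  have hB : 0 ≤ B := by positivity
  refine ⟨2 * (C * (B ^ q + B ^ (q - 1))), by positivity, fun ξ hξ ξ' hξ' κ κ' hfar a b => ?_⟩
  have hκδ : ‖κ‖ ≤ δ⁻¹ * ‖κ' - κ‖ := by rwa [inv_mul_eq_div, le_div_iff₀' hδ]
  have hκ : ‖κ‖ ≤ B * ‖κ' - κ‖ := by
    rw [add_mul]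
    linarith [norm_nonneg (κ' - κ)]
  have hκ' : ‖κ'‖ ≤ B * ‖κ' - κ‖ := by
    rw [add_mul]
    linarith [norm_le_norm_add_norm_sub' κ' κ]
  have hterm : ∀ ζ ∈ K, ∀ v : V, ‖v‖ ≤ B * ‖κ' - κ‖ → |fderiv ℝ G (ζ, v) (a, b)| ≤
      C * ((B ^ q + B ^ (q - 1)) * growthWeight q ‖κ' - κ‖ ‖a‖ ‖b‖) := fun ζ hζ v hv =>
    (hC ζ hζ v a b).trans <| mul_le_mul_of_nonneg_left
      ((growthWeight_mono_left hq.le (norm_nonneg v) hv (norm_nonneg a) (norm_nonneg b)).trans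
        (growthWeight_mul_left_le hB (norm_nonneg _) (norm_nonneg a) (norm_nonneg b))) hC0
  linarith [abs_sub (fderiv ℝ G (ξ', κ') (a, b)) (fderiv ℝ G (ξ, κ) (a, b)),
    hterm ξ hξ κ hκ, hterm ξ' hξ' κ' hκ']

theorem exists_abs_fderiv_sub_le [ProperSpace V] (hG : HomogeneousIntegrand q Ω G) (hq : 1 < q)
    (hK : IsCompact K) (hKΩ : K ⊆ Ω) {ε : ℝ} (hε : 0 < ε) :
    ∃ δ, 0 < δ ∧ ∃ C, 0 ≤ C ∧ ∀ ξ ∈ K, ∀ ξ' ∈ K, ‖ξ' - ξ‖ < δ → ∀ κ κ' a b,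
      |fderiv ℝ G (ξ', κ') (a, b) - fderiv ℝ G (ξ, κ) (a, b)| ≤
        ε * growthWeight q ‖κ‖ ‖a‖ ‖b‖ + C * growthWeight q ‖κ' - κ‖ ‖a‖ ‖b‖ := by
  obtain ⟨δ, hδ, hnear⟩ := hG.exists_abs_fderiv_sub_le_of_near hq hK hKΩ hε
  obtain ⟨C, hC0, hfar⟩ := hG.exists_abs_fderiv_sub_le_of_far hq hK hKΩ hδ
  refine ⟨δ, hδ, C, hC0, fun ξ hξ ξ' hξ' hξξ' κ κ' a b => ?_⟩
  have hw := growthWeight_nonneg q (norm_nonneg κ) (norm_nonneg a) (norm_nonneg b)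
  have hw' := growthWeight_nonneg q (norm_nonneg (κ' - κ)) (norm_nonneg a) (norm_nonneg b)
  rcases le_total ‖κ' - κ‖ (δ * ‖κ‖) with h | h
  · linarith [hnear ξ hξ ξ' hξ' hξξ' κ κ' h a b, mul_nonneg hC0 hw']
  · linarith [hfar ξ hξ ξ' hξ' κ κ' h a b, mul_nonneg hε.le hw]

end HomogeneousIntegrand

end Homogeneous

section IntegralFunctional

variable {X Z V W : Type*} [MeasurableSpace X] {μ : Measure X} [NormedAddCommGroup Z]
  [NormedAddCommGroup V] [NormedAddCommGroup W] {q : ℝ} {a : X → Z} {b : X → W} {κ : X → V}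

theorem lpNorm_rpow_eq_integral (hq : 0 < q) (hκ : MemLp κ (ENNReal.ofReal q) μ) :
    lpNorm κ (ENNReal.ofReal q) μ ^ q = ∫ x, ‖κ x‖ ^ q ∂μ := by
  rw [lpNorm_eq_integral_norm_rpow_toReal (by simpa using hq) ENNReal.ofReal_ne_top
    hκ.aestronglyMeasurable, ENNReal.toReal_ofReal hq.le,
    Real.rpow_inv_rpow (integral_nonneg fun x => by positivity) hq.ne']

theorem integrable_norm_rpow_of_memLp_ofReal (hq : 0 < q) (hκ : MemLp κ (ENNReal.ofReal q) μ) :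
    Integrable (fun x => ‖κ x‖ ^ q) μ := by
  simpa only [ENNReal.toReal_ofReal hq.le] using
    hκ.integrable_norm_rpow (by simpa using hq) ENNReal.ofReal_ne_top

theorem memLp_norm_rpow_sub_one (hq : 1 < q) (hκ : MemLp κ (ENNReal.ofReal q) μ) :
    MemLp (fun x => ‖κ x‖ ^ (q - 1)) (ENNReal.ofReal (q / (q - 1))) μ := by
  have h := hκ.norm_rpow_div (ENNReal.ofReal (q - 1))
  rwa [ENNReal.toReal_ofReal (by linarith), ← ENNReal.ofReal_div_of_pos (by linarith)] at h

theorem integrable_norm_rpow_mul_norm (hq : 0 < q) (ha : MemLp a ∞ μ)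
    (hκ : MemLp κ (ENNReal.ofReal q) μ) : Integrable (fun x => ‖κ x‖ ^ q * ‖a x‖) μ := by
  refine (integrable_norm_rpow_of_memLp_ofReal hq hκ).mul_bdd (c := lpNorm a ∞ μ)
    ha.aestronglyMeasurable.norm ?_
  simpa only [norm_norm] using ae_le_lpNorm_exponent_top ha

theorem integral_norm_rpow_mul_norm_le (hq : 0 < q) (ha : MemLp a ∞ μ)
    (hκ : MemLp κ (ENNReal.ofReal q) μ) :
    ∫ x, ‖κ x‖ ^ q * ‖a x‖ ∂μ ≤ lpNorm κ (ENNReal.ofReal q) μ ^ q * lpNorm a ∞ μ := by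
  rw [lpNorm_rpow_eq_integral hq hκ, ← integral_mul_const]
  refine integral_mono_ae (integrable_norm_rpow_mul_norm hq ha hκ)
    ((integrable_norm_rpow_of_memLp_ofReal hq hκ).mul_const _) ?_
  filter_upwards [ae_le_lpNorm_exponent_top ha] with x hx
  gcongr

theorem integrable_norm_rpow_sub_one_mul (hq : 1 < q) (hκ : MemLp κ (ENNReal.ofReal q) μ)
    (hb : MemLp b (ENNReal.ofReal q) μ) :
    Integrable (fun x => ‖κ x‖ ^ (q - 1) * ‖b x‖) μ := by
  have : ENNReal.HolderTriple (ENNReal.ofReal (q / (q - 1))) (ENNReal.ofReal q) 1 :=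
    (Real.HolderConjugate.conjExponent hq).symm.ennrealOfReal
  exact (memLp_norm_rpow_sub_one hq hκ).integrable_mul hb.norm

theorem integral_norm_rpow_sub_one_mul_le (hq : 1 < q) (hκ : MemLp κ (ENNReal.ofReal q) μ)
    (hb : MemLp b (ENNReal.ofReal q) μ) :
    ∫ x, ‖κ x‖ ^ (q - 1) * ‖b x‖ ∂μ ≤
      lpNorm κ (ENNReal.ofReal q) μ ^ (q - 1) * lpNorm b (ENNReal.ofReal q) μ := by
  have hq0 : 0 < q := by linarith
  have hq1 : q - 1 ≠ 0 := by linarith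
  refine (integral_mul_le_Lp_mul_Lq_of_nonneg (Real.HolderConjugate.conjExponent hq).symm
    (ae_of_all μ fun x => Real.rpow_nonneg (norm_nonneg (κ x)) (q - 1))
    (ae_of_all μ fun x => norm_nonneg (b x)) (memLp_norm_rpow_sub_one hq hκ) hb.norm).trans_eq ?_
  have hpow : ∀ x, (‖κ x‖ ^ (q - 1)) ^ q.conjExponent = ‖κ x‖ ^ q := fun x => by
    rw [← Real.rpow_mul (norm_nonneg _), Real.conjExponent, mul_div_cancel₀ _ hq1]
  have hexp : q * (1 / q.conjExponent) = q - 1 := by rw [Real.conjExponent]; field_simp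
  simp only [hpow]
  rw [← lpNorm_rpow_eq_integral hq0 hκ, ← lpNorm_rpow_eq_integral hq0 hb,
    ← Real.rpow_mul lpNorm_nonneg, hexp, one_div, Real.rpow_rpow_inv lpNorm_nonneg hq0.ne']

theorem integrable_growthWeight (hq : 1 < q) (ha : MemLp a ∞ μ)
    (hκ : MemLp κ (ENNReal.ofReal q) μ) (hb : MemLp b (ENNReal.ofReal q) μ) :
    Integrable (fun x => growthWeight q ‖κ x‖ ‖a x‖ ‖b x‖) μ :=
  (integrable_norm_rpow_mul_norm (by linarith) ha hκ).add
    (integrable_norm_rpow_sub_one_mul hq hκ hb)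

theorem integral_growthWeight_le (hq : 1 < q) (ha : MemLp a ∞ μ)
    (hκ : MemLp κ (ENNReal.ofReal q) μ) (hb : MemLp b (ENNReal.ofReal q) μ) :
    ∫ x, growthWeight q ‖κ x‖ ‖a x‖ ‖b x‖ ∂μ ≤
      growthWeight q (lpNorm κ (ENNReal.ofReal q) μ) 1 1 *
        (lpNorm a ∞ μ + lpNorm b (ENNReal.ofReal q) μ) := by
  have hq0 : 0 < q := by linarith
  refine le_trans ?_ (growthWeight_le_mul_add lpNorm_nonneg lpNorm_nonneg lpNorm_nonneg)
  simp only [growthWeight]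
  rw [integral_add (integrable_norm_rpow_mul_norm hq0 ha hκ)
    (integrable_norm_rpow_sub_one_mul hq hκ hb)]
  exact add_le_add (integral_norm_rpow_mul_norm_le hq0 ha hκ)
    (integral_norm_rpow_sub_one_mul_le hq hκ hb)

theorem aestronglyMeasurable_comp_of_ae_mem {E F : Type*} [TopologicalSpace E]
    [TopologicalSpace.PseudoMetrizableSpace E] [TopologicalSpace F]
    [TopologicalSpace.PseudoMetrizableSpace F] [SecondCountableTopologyEither E F]
    {f : E → F} {S : Set E} {φ : X → E} (hf : ContinuousOn f S) (hS : IsOpen S)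
    (hφ : AEStronglyMeasurable φ μ) (hmem : ∀ᵐ x ∂μ, φ x ∈ S) :
    AEStronglyMeasurable (fun x => f (φ x)) μ := by
  borelize E
  have hrestrict : (μ.map φ).restrict S = μ.map φ :=
    Measure.restrict_eq_self_of_ae_mem ((ae_map_iff hφ.aemeasurable hS.measurableSet).2 hmem)
  have hfS : AEStronglyMeasurable f (μ.map φ) :=
    hrestrict ▸ hf.aestronglyMeasurable hS.measurableSet
  exact hfS.comp_aemeasurable hφ.aemeasurable

theorem add_mem_cthickening_of_norm_le {K : Set Z} {x y : Z} {δ : ℝ} (hx : x ∈ K) (hy : ‖y‖ ≤ δ) :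
    x + y ∈ Metric.cthickening δ K :=
  Metric.mem_cthickening_of_dist_le _ _ _ _ hx (by rwa [dist_eq_norm, add_sub_cancel_left])

variable [NormedSpace ℝ Z] [NormedSpace ℝ V]

theorem norm_add_smul_le (v w : V) {τ : ℝ} (hτ : |τ| ≤ 1) : ‖v + τ • w‖ ≤ ‖v‖ + ‖w‖ := by
  refine (norm_add_le _ _).trans (add_le_add_right ?_ _)
  rw [norm_smul]
  exact mul_le_of_le_one_left (norm_nonneg _) hτ

theorem exists_ae_add_smul_mem_cthickening {K : Set Z} {ξ : X → Z} {δ : ℝ} (hδ : 0 < δ)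
    (hξK : ∀ᵐ x ∂μ, ξ x ∈ K) (ha : MemLp a ∞ μ) :
    ∃ r, 0 < r ∧ r ≤ 1 ∧ ∀ᵐ x ∂μ, ∀ τ ∈ Metric.ball (0 : ℝ) r,
      ξ x + τ • a x ∈ Metric.cthickening δ K := by
  have hA : 0 ≤ lpNorm a ∞ μ := lpNorm_nonneg
  refine ⟨min 1 (δ / (lpNorm a ∞ μ + 1)), by positivity, min_le_left _ _, ?_⟩
  filter_upwards [hξK, ae_le_lpNorm_exponent_top ha] with x hxK hx τ hτ
  refine add_mem_cthickening_of_norm_le hxK ?_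
  have hτ' : |τ| ≤ δ / (lpNorm a ∞ μ + 1) :=
    (mem_ball_zero_iff.1 hτ).le.trans (min_le_right _ _)
  rw [le_div_iff₀ (by positivity)] at hτ'
  rw [norm_smul, Real.norm_eq_abs]
  nlinarith [abs_nonneg τ]

/-- The first variation of `(ξ, κ) ↦ ∫ G(ξ, κ) dμ` in the direction `(a, b)`. -/
def firstVariation (G : Z × V → ℝ) (μ : Measure X) (ξ : X → Z) (κ : X → V) (a : X → Z)
    (b : X → V) : ℝ :=
  ∫ x, fderiv ℝ G (ξ x, κ x) (a x, b x) ∂μ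

namespace HomogeneousIntegrand

variable {Ω K : Set Z} {G : Z × V → ℝ} {ξ : X → Z} {b : X → V}

theorem hasDerivAt_comp_add_smul (hG : HomogeneousIntegrand q Ω G) {z c : Z} {τ : ℝ}
    (hz : z + τ • c ∈ Ω) (v w : V) :
    HasDerivAt (fun τ : ℝ => G (z + τ • c, v + τ • w)) (fderiv ℝ G (z + τ • c, v + τ • w) (c, w))
      τ := by
  have hline : HasDerivAt (fun τ : ℝ => (z + τ • c, v + τ • w)) (c, w) τ := by
    simpa only [one_smul, id] using (((hasDerivAt_id τ).smul_const c).const_add z).prodMk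
      (((hasDerivAt_id τ).smul_const w).const_add v)
  exact (hG.differentiableAt hz _).hasFDerivAt.comp_hasDerivAt τ hline

theorem aestronglyMeasurable_comp (hG : HomogeneousIntegrand q Ω G)
    (hξ : AEStronglyMeasurable ξ μ) (hξΩ : ∀ᵐ x ∂μ, ξ x ∈ Ω) (hκ : AEStronglyMeasurable κ μ) :
    AEStronglyMeasurable (fun x => G (ξ x, κ x)) μ :=
  aestronglyMeasurable_comp_of_ae_mem hG.contDiffOn.continuousOn (hG.isOpen.prod isOpen_univ)
    (hξ.prodMk hκ) (hξΩ.mono fun _ hx => ⟨hx, mem_univ _⟩)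

variable [ProperSpace V]

theorem integrable_comp (hG : HomogeneousIntegrand q Ω G) (hq : 0 < q) (hK : IsCompact K)
    (hKΩ : K ⊆ Ω) (hξ : AEStronglyMeasurable ξ μ) (hξK : ∀ᵐ x ∂μ, ξ x ∈ K)
    (hκ : MemLp κ (ENNReal.ofReal q) μ) : Integrable (fun x => G (ξ x, κ x)) μ := by
  obtain ⟨C, hC⟩ := hG.exists_abs_le hq hK hKΩ
  exact ((integrable_norm_rpow_of_memLp_ofReal hq hκ).const_mul C).mono'
    (hG.aestronglyMeasurable_comp hξ (hξK.mono fun _ hx => hKΩ hx) hκ.aestronglyMeasurable)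
    (hξK.mono fun x hx => hC _ hx _)

theorem exists_abs_firstVariation_le (hG : HomogeneousIntegrand q Ω G) (hq : 1 < q)
    (hK : IsCompact K) (hKΩ : K ⊆ Ω) (hξK : ∀ᵐ x ∂μ, ξ x ∈ K)
    (hκ : MemLp κ (ENNReal.ofReal q) μ) :
    ∃ C, 0 ≤ C ∧ ∀ (a : X → Z) (b : X → V), MemLp a ∞ μ → MemLp b (ENNReal.ofReal q) μ →
      |firstVariation G μ ξ κ a b| ≤ C * (lpNorm a ∞ μ + lpNorm b (ENNReal.ofReal q) μ) := by
  obtain ⟨C, hC0, hC⟩ := hG.exists_abs_fderiv_le hq hK hKΩ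
  have hw := growthWeight_nonneg q (lpNorm_nonneg (f := κ) (p := ENNReal.ofReal q) (μ := μ))
    zero_le_one zero_le_one
  refine ⟨C * growthWeight q (lpNorm κ (ENNReal.ofReal q) μ) 1 1, mul_nonneg hC0 hw,
    fun a b ha hb => ?_⟩
  have hbound :
      ‖firstVariation G μ ξ κ a b‖ ≤ ∫ x, C * growthWeight q ‖κ x‖ ‖a x‖ ‖b x‖ ∂μ :=
    norm_integral_le_of_norm_le ((integrable_growthWeight hq ha hκ hb).const_mul C)
      (hξK.mono fun x hx => hC _ hx _ _ _)
  rw [integral_const_mul, Real.norm_eq_abs] at hbound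
  rw [mul_assoc]
  exact hbound.trans (mul_le_mul_of_nonneg_left (integral_growthWeight_le hq ha hκ hb) hC0)

variable [ProperSpace Z]

theorem aestronglyMeasurable_fderiv (hG : HomogeneousIntegrand q Ω G)
    (hξ : AEStronglyMeasurable ξ μ) (hξΩ : ∀ᵐ x ∂μ, ξ x ∈ Ω) (hκ : AEStronglyMeasurable κ μ)
    (ha : AEStronglyMeasurable a μ) (hb : AEStronglyMeasurable b μ) :
    AEStronglyMeasurable (fun x => fderiv ℝ G (ξ x, κ x) (a x, b x)) μ := by
  have hfderiv : AEStronglyMeasurable (fun x => fderiv ℝ G (ξ x, κ x)) μ :=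
    aestronglyMeasurable_comp_of_ae_mem hG.continuousOn_fderiv (hG.isOpen.prod isOpen_univ)
      (hξ.prodMk hκ) (hξΩ.mono fun _ hx => ⟨hx, mem_univ _⟩)
  exact isBoundedBilinearMap_apply.continuous.comp_aestronglyMeasurable
    (hfderiv.prodMk (ha.prodMk hb))

theorem integrable_fderiv (hG : HomogeneousIntegrand q Ω G) (hq : 1 < q) (hK : IsCompact K)
    (hKΩ : K ⊆ Ω) (hξ : AEStronglyMeasurable ξ μ) (hξK : ∀ᵐ x ∂μ, ξ x ∈ K)
    (hκ : MemLp κ (ENNReal.ofReal q) μ) (ha : MemLp a ∞ μ) (hb : MemLp b (ENNReal.ofReal q) μ) :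
    Integrable (fun x => fderiv ℝ G (ξ x, κ x) (a x, b x)) μ := by
  obtain ⟨C, -, hC⟩ := hG.exists_abs_fderiv_le hq hK hKΩ
  exact ((integrable_growthWeight hq ha hκ hb).const_mul C).mono'
    (hG.aestronglyMeasurable_fderiv hξ (hξK.mono fun _ hx => hKΩ hx) hκ.aestronglyMeasurable
      ha.aestronglyMeasurable hb.aestronglyMeasurable)
    (hξK.mono fun x hx => hC _ hx _ _ _)

theorem hasDerivAt_integral (hG : HomogeneousIntegrand q Ω G) (hq : 1 < q) (hK : IsCompact K)
    (hKΩ : K ⊆ Ω) (hξ : AEStronglyMeasurable ξ μ) (hξK : ∀ᵐ x ∂μ, ξ x ∈ K)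
    (hκ : MemLp κ (ENNReal.ofReal q) μ) (ha : MemLp a ∞ μ) (hb : MemLp b (ENNReal.ofReal q) μ) :
    HasDerivAt (fun τ : ℝ => ∫ x, G (ξ x + τ • a x, κ x + τ • b x) ∂μ)
      (firstVariation G μ ξ κ a b) 0 := by
  obtain ⟨δ, hδ, hδΩ⟩ := hK.exists_cthickening_subset_open hG.isOpen hKΩ
  obtain ⟨C, hC0, hC⟩ := hG.exists_abs_fderiv_le hq hK.cthickening hδΩ
  obtain ⟨r, hr, hr1, hnear⟩ := exists_ae_add_smul_mem_cthickening hδ hξK ha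
  have hinc : MemLp (fun x => ‖κ x‖ + ‖b x‖) (ENNReal.ofReal q) μ := hκ.norm.add hb.norm
  have hξ' : ∀ τ : ℝ, AEStronglyMeasurable (fun x => ξ x + τ • a x) μ :=
    fun τ => hξ.add (ha.aestronglyMeasurable.const_smul τ)
  have hderiv := hasDerivAt_integral_of_dominated_loc_of_deriv_le (μ := μ) (𝕜 := ℝ) (x₀ := 0)
    (F := fun τ x => G (ξ x + τ • a x, κ x + τ • b x))
    (F' := fun τ x => fderiv ℝ G (ξ x + τ • a x, κ x + τ • b x) (a x, b x))
    (bound := fun x => C * growthWeight q ‖‖κ x‖ + ‖b x‖‖ ‖a x‖ ‖b x‖)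
    (Metric.ball_mem_nhds 0 hr) ?_ ?_ ?_ ?_
    ((integrable_growthWeight hq ha hinc hb).const_mul C) ?_
  · simpa only [firstVariation, zero_smul, add_zero] using hderiv.2
  · filter_upwards [Metric.ball_mem_nhds (0 : ℝ) hr] with τ hτ
    exact hG.aestronglyMeasurable_comp (hξ' τ) (hnear.mono fun x hx => hδΩ (hx τ hτ))
      (hκ.add (hb.const_smul τ)).aestronglyMeasurable
  · simpa only [zero_smul, add_zero] using hG.integrable_comp (by linarith) hK hKΩ hξ hξK hκ
  · simpa only [zero_smul, add_zero] using
      (hG.integrable_fderiv hq hK hKΩ hξ hξK hκ ha hb).aestronglyMeasurable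
  · filter_upwards [hnear] with x hx τ hτ
    refine (hC _ (hx τ hτ) _ _ _).trans ?_
    have hτ1 : |τ| ≤ 1 := (mem_ball_zero_iff.1 hτ).le.trans hr1
    have hsize := (norm_add_smul_le (κ x) (b x) hτ1).trans (le_abs_self _)
    exact mul_le_mul_of_nonneg_left (growthWeight_mono_left hq.le (norm_nonneg _) hsize
      (norm_nonneg _) (norm_nonneg _)) hC0
  · filter_upwards [hnear] with x hx τ hτ
    exact hG.hasDerivAt_comp_add_smul (hδΩ (hx τ hτ)) (κ x) (b x)

theorem firstVariation_linearCombination (hG : HomogeneousIntegrand q Ω G) (hq : 1 < q)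
    (hK : IsCompact K) (hKΩ : K ⊆ Ω) (hξ : AEStronglyMeasurable ξ μ) (hξK : ∀ᵐ x ∂μ, ξ x ∈ K)
    (hκ : MemLp κ (ENNReal.ofReal q) μ) {a₁ a₂ : X → Z} {b₁ b₂ : X → V}
    (ha₁ : MemLp a₁ ∞ μ) (hb₁ : MemLp b₁ (ENNReal.ofReal q) μ)
    (ha₂ : MemLp a₂ ∞ μ) (hb₂ : MemLp b₂ (ENNReal.ofReal q) μ) (s t : ℝ) :
    firstVariation G μ ξ κ (s • a₁ + t • a₂) (s • b₁ + t • b₂) =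
      s * firstVariation G μ ξ κ a₁ b₁ + t * firstVariation G μ ξ κ a₂ b₂ := by
  have hpoint : ∀ x, fderiv ℝ G (ξ x, κ x) ((s • a₁ + t • a₂) x, (s • b₁ + t • b₂) x) =
      s * fderiv ℝ G (ξ x, κ x) (a₁ x, b₁ x) + t * fderiv ℝ G (ξ x, κ x) (a₂ x, b₂ x) :=
    fun x => by
      rw [← smul_eq_mul, ← smul_eq_mul, ← ContinuousLinearMap.map_smul,
        ← ContinuousLinearMap.map_smul, ← map_add]
      rfl
  simp only [firstVariation, hpoint]
  rw [integral_add ((hG.integrable_fderiv hq hK hKΩ hξ hξK hκ ha₁ hb₁).const_mul s)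
    ((hG.integrable_fderiv hq hK hKΩ hξ hξK hκ ha₂ hb₂).const_mul t),
    integral_const_mul, integral_const_mul]

theorem exists_abs_firstVariation_sub_le_growthWeight (hG : HomogeneousIntegrand q Ω G)
    (hq : 1 < q) (hK : IsCompact K) (hKΩ : K ⊆ Ω) (hξ : AEStronglyMeasurable ξ μ)
    (hξK : ∀ᵐ x ∂μ, ξ x ∈ K) (hκ : MemLp κ (ENNReal.ofReal q) μ) {ε : ℝ} (hε : 0 < ε) :
    ∃ δ, 0 < δ ∧ ∃ C, 0 ≤ C ∧ ∀ (ζ : X → Z) (ρ : X → V), MemLp ζ ∞ μ →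
      MemLp ρ (ENNReal.ofReal q) μ → lpNorm ζ ∞ μ < δ →
      ∀ (a : X → Z) (b : X → V), MemLp a ∞ μ → MemLp b (ENNReal.ofReal q) μ →
        |firstVariation G μ (ξ + ζ) (κ + ρ) a b - firstVariation G μ ξ κ a b| ≤
          (ε * growthWeight q (lpNorm κ (ENNReal.ofReal q) μ) 1 1 +
            C * growthWeight q (lpNorm ρ (ENNReal.ofReal q) μ) 1 1) *
              (lpNorm a ∞ μ + lpNorm b (ENNReal.ofReal q) μ) := by
  obtain ⟨δ₀, hδ₀, hδ₀Ω⟩ := hK.exists_cthickening_subset_open hG.isOpen hKΩ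
  have hK' : IsCompact (Metric.cthickening δ₀ K) := hK.cthickening
  obtain ⟨δ₁, hδ₁, C, hC0, hC⟩ := hG.exists_abs_fderiv_sub_le hq hK' hδ₀Ω hε
  refine ⟨min δ₀ δ₁, by positivity, C, hC0, fun ζ ρ hζ hρ hζδ a b ha hb => ?_⟩
  have hζsmall : ∀ᵐ x ∂μ, ‖ζ x‖ < min δ₀ δ₁ :=
    (ae_le_lpNorm_exponent_top hζ).mono fun x hx => hx.trans_lt hζδ
  have hξζK' : ∀ᵐ x ∂μ, (ξ + ζ) x ∈ Metric.cthickening δ₀ K := by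
    filter_upwards [hξK, hζsmall] with x hxK hx using
      add_mem_cthickening_of_norm_le hxK (hx.trans_le (min_le_left _ _)).le
  have hκw := (integrable_growthWeight hq ha hκ hb).const_mul ε
  have hρw := (integrable_growthWeight hq ha hρ hb).const_mul C
  have hbound : ‖firstVariation G μ (ξ + ζ) (κ + ρ) a b - firstVariation G μ ξ κ a b‖ ≤
      ∫ x, (ε * growthWeight q ‖κ x‖ ‖a x‖ ‖b x‖ + C * growthWeight q ‖ρ x‖ ‖a x‖ ‖b x‖) ∂μ := by
    rw [firstVariation, firstVariation, ← integral_sub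
      (hG.integrable_fderiv hq hK' hδ₀Ω (hξ.add hζ.aestronglyMeasurable) hξζK' (hκ.add hρ) ha hb)
      (hG.integrable_fderiv hq hK hKΩ hξ hξK hκ ha hb)]
    refine norm_integral_le_of_norm_le (hκw.add hρw) ?_
    filter_upwards [hξK, hξζK', hζsmall] with x hx hx' hxζ
    simpa only [Pi.add_apply, add_sub_cancel_left, Real.norm_eq_abs] using
      hC (ξ x) (Metric.self_subset_cthickening K hx) _ hx'
        (by simpa only [Pi.add_apply, add_sub_cancel_left] using
          hxζ.trans_le (min_le_right _ _)) (κ x) ((κ + ρ) x) (a x) (b x)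
  rw [integral_add hκw hρw, integral_const_mul, integral_const_mul, Real.norm_eq_abs] at hbound
  refine hbound.trans ?_
  rw [add_mul, mul_assoc, mul_assoc]
  gcongr
  · exact integral_growthWeight_le hq ha hκ hb
  · exact integral_growthWeight_le hq ha hρ hb

theorem exists_abs_firstVariation_sub_le (hG : HomogeneousIntegrand q Ω G) (hq : 1 < q)
    (hK : IsCompact K) (hKΩ : K ⊆ Ω) (hξ : AEStronglyMeasurable ξ μ) (hξK : ∀ᵐ x ∂μ, ξ x ∈ K)
    (hκ : MemLp κ (ENNReal.ofReal q) μ) {ε : ℝ} (hε : 0 < ε) :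
    ∃ δ, 0 < δ ∧ ∀ (ζ : X → Z) (ρ : X → V), MemLp ζ ∞ μ → MemLp ρ (ENNReal.ofReal q) μ →
      lpNorm ζ ∞ μ < δ → lpNorm ρ (ENNReal.ofReal q) μ < δ →
      ∀ (a : X → Z) (b : X → V), MemLp a ∞ μ → MemLp b (ENNReal.ofReal q) μ →
        |firstVariation G μ (ξ + ζ) (κ + ρ) a b - firstVariation G μ ξ κ a b| ≤
          ε * (lpNorm a ∞ μ + lpNorm b (ENNReal.ofReal q) μ) := by
  set w := growthWeight q (lpNorm κ (ENNReal.ofReal q) μ) 1 1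
  have hw : 0 ≤ w := growthWeight_nonneg q lpNorm_nonneg zero_le_one zero_le_one
  obtain ⟨δ₁, hδ₁, C, -, hC⟩ := hG.exists_abs_firstVariation_sub_le_growthWeight hq hK hKΩ hξ hξK
    hκ (ε := ε / (2 * (w + 1))) (by positivity)
  have hsmall : ∀ᶠ t : ℝ in 𝓝 0, C * growthWeight q t 1 1 < ε / 2 := by
    refine ((continuous_growthWeight hq 1 1).const_mul C).continuousAt.eventually_lt_const ?_
    simpa only [growthWeight_zero hq, mul_zero] using half_pos hε
  obtain ⟨δ₂, hδ₂, hsmall⟩ := Metric.eventually_nhds_iff.1 hsmall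
  refine ⟨min δ₁ δ₂, by positivity, fun ζ ρ hζ hρ hζδ hρδ a b ha hb =>
    (hC ζ ρ hζ hρ (hζδ.trans_le (min_le_left _ _)) a b ha hb).trans ?_⟩
  refine mul_le_mul_of_nonneg_right ?_ (add_nonneg lpNorm_nonneg lpNorm_nonneg)
  have hεw : ε / (2 * (w + 1)) * w ≤ ε / 2 := by
    rw [div_mul_eq_mul_div, div_le_iff₀ (by positivity)]
    linarith
  have hρw := hsmall (y := lpNorm ρ (ENNReal.ofReal q) μ) (by
    rw [Real.dist_0_eq_abs, abs_of_nonneg lpNorm_nonneg]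
    exact hρδ.trans_le (min_le_right _ _))
  linarith

end HomogeneousIntegrand

end IntegralFunctional

section NormShell

variable {ι V : Type*} [NormedAddCommGroup V] {c M : ℝ} {ξ : ι → V}

/-- The families of vectors with all norms in `[c, M]`. -/
def normShell (ι V : Type*) [NormedAddCommGroup V] (c M : ℝ) : Set (ι → V) :=
  {ξ | ∀ i, c ≤ ‖ξ i‖ ∧ ‖ξ i‖ ≤ M}

theorem isCompact_normShell [ProperSpace V] (c M : ℝ) : IsCompact (normShell ι V c M) := by
  have hball : normShell ι V c M =
      univ.pi (fun _ => Metric.closedBall (0 : V) M ∩ {v | c ≤ ‖v‖}) := by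
    ext ξ
    simp [normShell, and_comm]
  rw [hball]
  exact isCompact_univ_pi fun _ =>
    (isCompact_closedBall 0 M).inter_right (isClosed_le continuous_const continuous_norm)

theorem normShell_subset_ne_zero (hc : 0 < c) (M : ℝ) :
    normShell ι V c M ⊆ {ξ | ∀ i, ξ i ≠ 0} :=
  fun _ hξ i => norm_pos_iff.1 (hc.trans_le (hξ i).1)

end NormShell

section Density

variable {V : Type*} [NormedAddCommGroup V] [InnerProductSpace ℝ V]

/-- The component of `κ` orthogonal to `P`, multiplied by `‖P‖`. Its norm is the area of the
parallelogram spanned by `P` and `κ`. -/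
def scaledRejection (P κ : V) : V := ‖P‖ • κ - (inner ℝ P κ / ‖P‖ : ℝ) • P

theorem norm_scaledRejection (P κ : V) :
    ‖scaledRejection P κ‖ = Real.sqrt (‖P‖ ^ 2 * ‖κ‖ ^ 2 - (inner ℝ P κ : ℝ) ^ 2) := by
  obtain rfl | hP := eq_or_ne P 0
  · simp [scaledRejection]
  have hP' : ‖P‖ ≠ 0 := norm_ne_zero_iff.2 hP
  rw [← Real.sqrt_sq (norm_nonneg (scaledRejection P κ))]
  congr 1
  rw [scaledRejection, norm_sub_sq_real, norm_smul, norm_smul, inner_smul_left, inner_smul_right,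
    norm_norm, Real.norm_eq_abs, mul_pow, mul_pow, sq_abs, real_inner_comm κ P]
  simp only [conj_trivial]
  field_simp
  ring

theorem scaledRejection_smul_right (P : V) (t : ℝ) (κ : V) :
    scaledRejection P (t • κ) = t • scaledRejection P κ := by
  simp only [scaledRejection, inner_smul_right, smul_sub, smul_smul]
  congr 2 <;> ring

theorem contDiffAt_scaledRejection {z : V × V} (hz : z.1 ≠ 0) :
    ContDiffAt ℝ 1 (fun z : V × V => scaledRejection z.1 z.2) z := by
  have hnorm : ContDiffAt ℝ 1 (fun z : V × V => ‖z.1‖) z := contDiffAt_fst.norm ℝ hz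
  exact (hnorm.smul contDiffAt_snd).sub (((contDiffAt_fst.inner ℝ contDiffAt_snd).div hnorm
    (norm_ne_zero_iff.2 hz)).smul contDiffAt_fst)

/-- The Menger integrand as a function of `(ξ, κ)`, where `ξ 0, ξ 1, ξ 2` are the velocities at the
three points, `ξ 3, ξ 4, ξ 5` are the difference quotients along the three chords, and `κ` is a
weighted difference of the first two of these quotients. -/
def mengerDensity (p q : ℝ) (z : (Fin 6 → V) × V) : ℝ :=
  ‖z.1 0‖ * ‖z.1 1‖ * ‖z.1 2‖ * ‖scaledRejection (z.1 3) z.2‖ ^ q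
    / (‖z.1 3‖ * ‖z.1 4‖ * ‖z.1 5‖) ^ p

theorem mengerDensity_nonneg (p q : ℝ) (z : (Fin 6 → V) × V) : 0 ≤ mengerDensity p q z := by
  unfold mengerDensity; positivity

theorem mengerDensity_smul (p q : ℝ) {t : ℝ} (ht : 0 ≤ t) (ξ : Fin 6 → V) (κ : V) :
    mengerDensity p q (ξ, t • κ) = t ^ q * mengerDensity p q (ξ, κ) := by
  simp only [mengerDensity, scaledRejection_smul_right, norm_smul, Real.norm_of_nonneg ht,
    Real.mul_rpow ht (norm_nonneg _)]
  ring

theorem contDiffAt_mengerDensity (p : ℝ) {q : ℝ} (hq : 1 < q) {z : (Fin 6 → V) × V}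
    (hz : ∀ i, z.1 i ≠ 0) : ContDiffAt ℝ 1 (mengerDensity p q) z := by
  have hcoord : ∀ i : Fin 6, ContDiffAt ℝ 1 (fun z : (Fin 6 → V) × V => z.1 i) z := fun i => by
    fun_prop
  have hnorm : ∀ i : Fin 6, ContDiffAt ℝ 1 (fun z : (Fin 6 → V) × V => ‖z.1 i‖) z := fun i =>
    (hcoord i).norm ℝ (hz i)
  have hrej : ContDiffAt ℝ 1 (fun z : (Fin 6 → V) × V => scaledRejection (z.1 3) z.2) z :=
    ContDiffAt.comp (g := fun w : V × V => scaledRejection w.1 w.2) z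
      (contDiffAt_scaledRejection (hz 3)) ((hcoord 3).prodMk contDiffAt_snd)
  have hnum : ContDiffAt ℝ 1
      (fun z : (Fin 6 → V) × V => ‖scaledRejection (z.1 3) z.2‖ ^ q) z :=
    (contDiff_norm_rpow hq).contDiffAt.comp z hrej
  have hchords : 0 < ‖z.1 3‖ * ‖z.1 4‖ * ‖z.1 5‖ := by
    have := fun i => norm_pos_iff.2 (hz i)
    exact mul_pos (mul_pos (this 3) (this 4)) (this 5)
  exact ((((hnorm 0).mul (hnorm 1)).mul (hnorm 2)).mul hnum).div
    ((((hnorm 3).mul (hnorm 4)).mul (hnorm 5)).rpow_const_of_ne hchords.ne')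
    (Real.rpow_pos_of_pos hchords p).ne'

theorem homogeneousIntegrand_mengerDensity (p : ℝ) {q : ℝ} (hq : 1 < q) :
    HomogeneousIntegrand q {ξ : Fin 6 → V | ∀ i, ξ i ≠ 0} (mengerDensity p q) where
  isOpen := by
    simp only [ofPred_forall]
    exact isOpen_iInter_of_finite fun i => isOpen_ne_fun (continuous_apply i) continuous_const
  contDiffOn := fun _ hz => (contDiffAt_mengerDensity p hq hz.1).contDiffWithinAt
  map_smul := fun _ ht ξ _ κ => mengerDensity_smul p q ht.le ξ κ

end Density

section Periodic

theorem setLIntegral_Ico_eq_of_periodic {f : ℝ → ℝ≥0∞} (hf : Function.Periodic f 1) (a b : ℝ) :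
    ∫⁻ x in Ico a (a + 1), f x = ∫⁻ x in Ico b (b + 1), f x := by
  rw [setLIntegral_congr Ico_ae_eq_Ioc,
    setLIntegral_congr (μ := volume) (s := Ico b (b + 1)) Ico_ae_eq_Ioc]
  refine (isAddFundamentalDomain_Ioc one_pos a).setLIntegral_eq
    (isAddFundamentalDomain_Ioc one_pos b) f fun g x => ?_
  obtain ⟨k, hk⟩ := AddSubgroup.mem_zmultiples_iff.1 g.2
  rw [AddSubgroup.vadd_def, ← hk, vadd_eq_add, add_comm]
  exact hf.zsmul k x

theorem setLIntegral_Ico_comp_add (f : ℝ → ℝ≥0∞) (a b c : ℝ) :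
    ∫⁻ x in Ico a b, f (x + c) = ∫⁻ x in Ico (a + c) (b + c), f x := by
  rw [← (measurePreserving_add_right (volume : Measure ℝ) c).setLIntegral_comp_preimage_emb
    (measurableEmbedding_addRight c) f (Ico (a + c) (b + c))]
  simp

theorem setLIntegral_Ico_comp_add_of_periodic {f : ℝ → ℝ≥0∞} (hf : Function.Periodic f 1) (c : ℝ) :
    ∫⁻ x in Ico (0 : ℝ) 1, f (x + c) = ∫⁻ x in Ico (0 : ℝ) 1, f x := by
  rw [setLIntegral_Ico_comp_add, zero_add, add_comm 1 c, setLIntegral_Ico_eq_of_periodic hf c 0,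
    zero_add]

end Periodic

section ArcDomain

/-- Pairs `(a, b)` of arc lengths such that the third arc of the circle, of length `1 - a - b`, is
the longest one. -/
def arcDomain : Set (ℝ × ℝ) :=
  {d | 0 < d.1 ∧ 0 < d.2 ∧ 2 * d.1 + d.2 < 1 ∧ d.1 + 2 * d.2 < 1}

theorem measurableSet_arcDomain : MeasurableSet arcDomain := by
  unfold arcDomain
  measurability

/-- The pairs `0 < v < w < 1`, which parametrize the positions of two further points on a circle of
length one relative to a first point at `0`. -/
def upperTriangle : Set (ℝ × ℝ) := {d | 0 < d.1 ∧ d.1 < d.2 ∧ d.2 < 1}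

theorem measurableSet_upperTriangle : MeasurableSet upperTriangle := by
  unfold upperTriangle
  measurability

theorem ae_mul_add_mul_ne (α c : ℝ) {β : ℝ} (hβ : β ≠ 0) :
    ∀ᵐ d : ℝ × ℝ, α * d.1 + β * d.2 ≠ c := by
  have hmeas : MeasurableSet {d : ℝ × ℝ | α * d.1 + β * d.2 = c} :=
    measurableSet_eq_fun (by fun_prop) (by fun_prop)
  rw [ae_iff, Measure.volume_eq_prod]
  simp only [not_not]
  rw [Measure.measure_prod_null hmeas]
  refine Eventually.of_forall fun x => Subsingleton.measure_zero (fun y hy z hz => ?_) _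
  simp only [mem_preimage, mem_ofPred_eq] at hy hz
  exact mul_left_cancel₀ hβ (by linarith)

/-- The lengths of the two arcs adjacent to the point `v`, among the points `0 < v < w < 1`. -/
def arcsAtSecond (d : ℝ × ℝ) : ℝ × ℝ := (d.2 - d.1, d.1)

/-- The lengths of the two arcs adjacent to the point `0`, among the points `0 < v < w < 1`. -/
def arcsAtFirst (d : ℝ × ℝ) : ℝ × ℝ := (d.1, 1 - d.2)

/-- The lengths of the two arcs adjacent to the point `w`, among the points `0 < v < w < 1`. -/
def arcsAtThird (d : ℝ × ℝ) : ℝ × ℝ := (1 - d.2, d.2 - d.1)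

theorem measurePreserving_arcsAtSecond : MeasurePreserving arcsAtSecond :=
  Measure.measurePreserving_swap.comp
    (measurePreserving_prod_sub (volume : Measure ℝ) (volume : Measure ℝ))

theorem measurePreserving_arcsAtFirst : MeasurePreserving arcsAtFirst :=
  (MeasurePreserving.id volume).prod (volume.measurePreserving_sub_left 1)

theorem measurePreserving_arcsAtThird : MeasurePreserving arcsAtThird := by
  have hcomp : arcsAtThird = (fun z : ℝ × ℝ => (z.1, z.2 - z.1)) ∘ arcsAtFirst ∘ Prod.swap ∘
      arcsAtFirst := by
    funext d
    simp [arcsAtThird, arcsAtFirst]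
  rw [hcomp]
  exact (measurePreserving_prod_sub (volume : Measure ℝ) (volume : Measure ℝ)).comp
    (measurePreserving_arcsAtFirst.comp
      (Measure.measurePreserving_swap.comp measurePreserving_arcsAtFirst))

theorem upperTriangle_ae_eq : upperTriangle =ᵐ[volume]
    (arcsAtSecond ⁻¹' arcDomain ∪ arcsAtFirst ⁻¹' arcDomain ∪
      arcsAtThird ⁻¹' arcDomain : Set (ℝ × ℝ)) := by
  rw [eventuallyEq_set]
  filter_upwards [ae_mul_add_mul_ne (-2) 0 (one_ne_zero (α := ℝ)),
    ae_mul_add_mul_ne (-1) 1 (two_ne_zero (α := ℝ)),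
    ae_mul_add_mul_ne 1 1 (one_ne_zero (α := ℝ))] with d h₁ h₂ h₃
  simp only [upperTriangle, arcDomain, arcsAtSecond, arcsAtFirst, arcsAtThird, mem_union,
    mem_preimage, mem_ofPred_eq]
  grind

theorem disjoint_preimage_arcsAtSecond_arcsAtFirst :
    Disjoint (arcsAtSecond ⁻¹' arcDomain) (arcsAtFirst ⁻¹' arcDomain) :=
  disjoint_left.2 fun d h₁ h₂ => by
    simp only [arcDomain, arcsAtSecond, arcsAtFirst, mem_preimage, mem_ofPred_eq] at h₁ h₂
    linarith

theorem disjoint_preimage_union_arcsAtThird :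
    Disjoint (arcsAtSecond ⁻¹' arcDomain ∪ arcsAtFirst ⁻¹' arcDomain)
      (arcsAtThird ⁻¹' arcDomain) :=
  disjoint_left.2 fun d h₁ h₂ => by
    simp only [arcDomain, arcsAtSecond, arcsAtFirst, arcsAtThird, mem_union, mem_preimage,
      mem_ofPred_eq] at h₁ h₂
    rcases h₁ with h₁ | h₁ <;> linarith

theorem square_ae_eq : (Ico (0 : ℝ) 1 ×ˢ Ico (0 : ℝ) 1 : Set (ℝ × ℝ)) =ᵐ[volume]
    (upperTriangle ∪ Prod.swap ⁻¹' upperTriangle : Set (ℝ × ℝ)) := by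
  rw [eventuallyEq_set]
  filter_upwards [ae_mul_add_mul_ne (-1) 0 (one_ne_zero (α := ℝ)),
    ae_mul_add_mul_ne 0 0 (one_ne_zero (α := ℝ)),
    Measure.measurePreserving_swap.quasiMeasurePreserving.ae
      (ae_mul_add_mul_ne 0 0 (one_ne_zero (α := ℝ)))] with d h₁ h₂ h₃
  simp only [upperTriangle, mem_prod, mem_Ico, mem_union, mem_preimage, mem_ofPred_eq,
    Prod.fst_swap, Prod.snd_swap] at h₃ ⊢
  grind

theorem disjoint_upperTriangle_preimage_swap :
    Disjoint upperTriangle (Prod.swap ⁻¹' upperTriangle) :=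
  disjoint_left.2 fun d h₁ h₂ => by
    simp only [upperTriangle, mem_preimage, mem_ofPred_eq, Prod.fst_swap, Prod.snd_swap] at h₁ h₂
    linarith

end ArcDomain

section Symmetrization

/-- A function of three points of `ℝ/ℤ`, given as a `1`-periodic function of real variables, whose
value does not depend on the order of the points. It suffices to ask for periodicity in the last
variable and for invariance under the two adjacent transpositions. -/
structure SymmetricPeriodic (F : ℝ → ℝ → ℝ → ℝ≥0∞) : Prop where
  periodic : ∀ x y, Function.Periodic (F x y) 1
  swap_left : ∀ x y z, F x y z = F y x z
  swap_right : ∀ x y z, F x y z = F x z y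

/-- The integral of `F` over all rigid translations of the configuration `(0, d.1, d.2)`. -/
def translationIntegral (F : ℝ → ℝ → ℝ → ℝ≥0∞) (d : ℝ × ℝ) : ℝ≥0∞ :=
  ∫⁻ u in Ico (0 : ℝ) 1, F u (u + d.1) (u + d.2)

theorem measurable_translationIntegral {F : ℝ → ℝ → ℝ → ℝ≥0∞}
    (hF : Measurable fun x : ℝ × ℝ × ℝ => F x.1 x.2.1 x.2.2) :
    Measurable (translationIntegral F) := by
  have hcomp : Measurable fun x : (ℝ × ℝ) × ℝ => F x.2 (x.2 + x.1.1) (x.2 + x.1.2) :=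
    hF.comp (by fun_prop : Measurable fun x : (ℝ × ℝ) × ℝ => (x.2, x.2 + x.1.1, x.2 + x.1.2))
  exact hcomp.lintegral_prod_right'

namespace SymmetricPeriodic

variable {F : ℝ → ℝ → ℝ → ℝ≥0∞} (h : SymmetricPeriodic F)
include h

theorem periodic_middle (x z : ℝ) : Function.Periodic (fun y => F x y z) 1 := fun y => by
  simp only [h.swap_right x _ z]
  exact h.periodic x z y

theorem periodic_left (y z : ℝ) : Function.Periodic (fun x => F x y z) 1 := fun x => by
  simp only [h.swap_left _ y z]
  exact h.periodic_middle y z x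

theorem translationIntegral_swap (v w : ℝ) :
    translationIntegral F (v, w) = translationIntegral F (w, v) :=
  lintegral_congr fun _ => h.swap_right _ _ _

theorem translationIntegral_add_one (v w : ℝ) :
    translationIntegral F (v, w + 1) = translationIntegral F (v, w) :=
  lintegral_congr fun u => by simp only [← add_assoc]; exact h.periodic _ _ _

theorem translationIntegral_neg_sub (v w : ℝ) :
    translationIntegral F (-v, w - v) = translationIntegral F (v, w) := by
  have hper : Function.Periodic (fun u => F u (u + v) (u + w)) 1 := fun u => by
    simp only [add_right_comm u 1]
    rw [h.periodic _ _ (u + w)]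
    exact (h.periodic_middle _ _ (u + v)).trans (h.periodic_left _ _ u)
  unfold translationIntegral
  rw [← setLIntegral_Ico_comp_add_of_periodic hper (-v)]
  refine lintegral_congr fun u => ?_
  rw [h.swap_left]
  congr 1 <;> ring

theorem setLIntegral_upperTriangle
    (hF : Measurable fun x : ℝ × ℝ × ℝ => F x.1 x.2.1 x.2.2) :
    ∫⁻ d in upperTriangle, translationIntegral F d =
      3 * ∫⁻ d in arcDomain, translationIntegral F (d.1, -d.2) := by
  have hmeas : Measurable fun d : ℝ × ℝ => translationIntegral F (d.1, -d.2) :=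
    (measurable_translationIntegral hF).comp (by fun_prop)
  have transport : ∀ φ : ℝ × ℝ → ℝ × ℝ, MeasurePreserving φ →
      (∀ d, translationIntegral F ((φ d).1, -(φ d).2) = translationIntegral F d) →
      ∫⁻ d in φ ⁻¹' arcDomain, translationIntegral F d =
        ∫⁻ d in arcDomain, translationIntegral F (d.1, -d.2) := fun φ hφ hinv => by
    rw [← hφ.setLIntegral_comp_preimage measurableSet_arcDomain hmeas]
    simp only [hinv]
  have hsecond := transport _ measurePreserving_arcsAtSecond fun d => by
    simp only [arcsAtSecond]
    rw [h.translationIntegral_swap, h.translationIntegral_neg_sub]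
  have hfirst := transport _ measurePreserving_arcsAtFirst fun d => by
    simp only [arcsAtFirst]
    rw [← h.translationIntegral_add_one, neg_sub, sub_add_cancel]
  have hthird := transport _ measurePreserving_arcsAtThird fun d => by
    simp only [arcsAtThird]
    rw [h.translationIntegral_swap, neg_sub, show 1 - d.2 = -d.2 + 1 by ring,
      h.translationIntegral_add_one, h.translationIntegral_swap,
      h.translationIntegral_neg_sub d.2 d.1, h.translationIntegral_swap]
  rw [setLIntegral_congr upperTriangle_ae_eq,
    lintegral_union (measurePreserving_arcsAtThird.measurable measurableSet_arcDomain)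
      disjoint_preimage_union_arcsAtThird,
    lintegral_union (measurePreserving_arcsAtFirst.measurable measurableSet_arcDomain)
      disjoint_preimage_arcsAtSecond_arcsAtFirst, hsecond, hfirst, hthird]
  ring

theorem setLIntegral_square (hF : Measurable fun x : ℝ × ℝ × ℝ => F x.1 x.2.1 x.2.2) :
    ∫⁻ d in Ico (0 : ℝ) 1 ×ˢ Ico (0 : ℝ) 1, translationIntegral F d =
      6 * ∫⁻ d in arcDomain, translationIntegral F (d.1, -d.2) := by
  have hpres : MeasurePreserving (Prod.swap : ℝ × ℝ → ℝ × ℝ) := Measure.measurePreserving_swap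
  have hswap : ∫⁻ d in Prod.swap ⁻¹' upperTriangle, translationIntegral F d =
      ∫⁻ d in upperTriangle, translationIntegral F d := by
    rw [← hpres.setLIntegral_comp_preimage measurableSet_upperTriangle
      (measurable_translationIntegral hF)]
    exact lintegral_congr fun d => h.translationIntegral_swap d.1 d.2
  rw [setLIntegral_congr square_ae_eq,
    lintegral_union (measurable_swap measurableSet_upperTriangle)
      disjoint_upperTriangle_preimage_swap, hswap, h.setLIntegral_upperTriangle hF]
  ring

theorem lintegral_lintegral_eq_translate
    (hF : Measurable fun x : ℝ × ℝ × ℝ => F x.1 x.2.1 x.2.2) (u : ℝ) :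
    ∫⁻ v in Ico (0 : ℝ) 1, ∫⁻ w in Ico (0 : ℝ) 1, F u v w =
      ∫⁻ d in Ico (0 : ℝ) 1 ×ˢ Ico (0 : ℝ) 1, F u (u + d.1) (u + d.2) := by
  have hinner : ∀ v, ∫⁻ w in Ico (0 : ℝ) 1, F u v w = ∫⁻ w in Ico (0 : ℝ) 1, F u v (w + u) :=
    fun v => (setLIntegral_Ico_comp_add_of_periodic (h.periodic u v) u).symm
  have houter : Function.Periodic (fun v => ∫⁻ w in Ico (0 : ℝ) 1, F u v (w + u)) 1 :=
    fun v => lintegral_congr fun w => h.periodic_middle u _ v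
  have hmeas : Measurable fun d : ℝ × ℝ => F u (u + d.1) (u + d.2) :=
    hF.comp (by fun_prop : Measurable fun d : ℝ × ℝ => (u, u + d.1, u + d.2))
  simp only [hinner]
  rw [← setLIntegral_Ico_comp_add_of_periodic houter u, Measure.volume_eq_prod,
    ← Measure.prod_restrict, lintegral_prod _ hmeas.aemeasurable]
  simp only [add_comm]

end SymmetricPeriodic

/-- Lebesgue measure on the configurations `(u, a, b)` of a point `u` of `ℝ/ℤ` and the lengths
`a, b` of its adjacent arcs, the opposite arc being the longest one. -/
def arcMeasure : Measure (ℝ × ℝ × ℝ) :=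
  (volume.restrict (Ico (0 : ℝ) 1)).prod (volume.restrict arcDomain)

theorem SymmetricPeriodic.lintegral_eq_arcMeasure {F : ℝ → ℝ → ℝ → ℝ≥0∞}
    (h : SymmetricPeriodic F) (hF : Measurable fun x : ℝ × ℝ × ℝ => F x.1 x.2.1 x.2.2) :
    ∫⁻ u in Ico (0 : ℝ) 1, ∫⁻ v in Ico (0 : ℝ) 1, ∫⁻ w in Ico (0 : ℝ) 1, F u v w =
      6 * ∫⁻ x, F x.1 (x.1 + x.2.1) (x.1 - x.2.2) ∂arcMeasure := by
  have hmeas : Measurable (Function.uncurry fun u (d : ℝ × ℝ) => F u (u + d.1) (u + d.2)) :=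
    hF.comp (by fun_prop : Measurable fun x : ℝ × ℝ × ℝ => (x.1, x.1 + x.2.1, x.1 + x.2.2))
  have hmeas' : Measurable fun x : ℝ × ℝ × ℝ => F x.1 (x.1 + x.2.1) (x.1 - x.2.2) :=
    hF.comp (by fun_prop : Measurable fun x : ℝ × ℝ × ℝ => (x.1, x.1 + x.2.1, x.1 - x.2.2))
  simp only [h.lintegral_lintegral_eq_translate hF]
  rw [lintegral_lintegral_swap hmeas.aemeasurable]
  refine (h.setLIntegral_square hF).trans ?_
  rw [arcMeasure, lintegral_prod_symm _ hmeas'.aemeasurable]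
  simp only [translationIntegral, sub_eq_add_neg]

end Symmetrization

section Jensen

variable {α β E : Type*} [MeasurableSpace α] [MeasurableSpace β] [NormedAddCommGroup E]
  [NormedSpace ℝ E]

theorem rpow_lintegral_le_lintegral_rpow (μ : Measure α) [IsProbabilityMeasure μ] {q : ℝ}
    (hq : 1 < q) {f : α → ℝ≥0∞} (hf : AEMeasurable f μ) :
    (∫⁻ x, f x ∂μ) ^ q ≤ ∫⁻ x, f x ^ q ∂μ := by
  have h := ENNReal.lintegral_mul_le_Lp_mul_Lq μ (Real.HolderConjugate.conjExponent hq) hf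
    (aemeasurable_const (b := 1))
  simp only [Pi.mul_apply, mul_one, ENNReal.one_rpow, lintegral_one, measure_univ] at h
  rwa [one_div, ENNReal.le_rpow_inv_iff (by linarith)] at h

theorem enorm_integral_rpow_le_lintegral_rpow {μ : Measure α} [IsProbabilityMeasure μ] {q : ℝ}
    (hq : 1 < q) {g : α → E} (hg : AEStronglyMeasurable g μ) :
    ‖∫ x, g x ∂μ‖ₑ ^ q ≤ ∫⁻ x, ‖g x‖ₑ ^ q ∂μ :=
  (ENNReal.rpow_le_rpow (enorm_integral_le_lintegral_enorm _) (by linarith)).trans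
    (rpow_lintegral_le_lintegral_rpow μ hq hg.enorm)

theorem enorm_integral_sub_integral_rpow_le {μ : Measure α} {ν : Measure β}
    [IsProbabilityMeasure μ] [IsProbabilityMeasure ν] [CompleteSpace E] {q : ℝ} (hq : 1 < q)
    {g : α → E} {h : β → E} (hg : Integrable g μ) (hh : Integrable h ν) :
    ‖∫ y, g y ∂μ - ∫ z, h z ∂ν‖ₑ ^ q ≤ ∫⁻ y, ∫⁻ z, ‖h z - g y‖ₑ ^ q ∂ν ∂μ := by
  have houter : ∫ y, g y ∂μ - ∫ z, h z ∂ν = ∫ y, (g y - ∫ z, h z ∂ν) ∂μ := by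
    rw [integral_sub hg (integrable_const _)]
    simp
  have hinner : ∀ y, g y - ∫ z, h z ∂ν = -∫ z, (h z - g y) ∂ν := fun y => by
    rw [integral_sub hh (integrable_const _)]
    simp
  rw [houter]
  refine (enorm_integral_rpow_le_lintegral_rpow hq
    (hg.1.sub aestronglyMeasurable_const)).trans (lintegral_mono fun y => ?_)
  rw [Pi.sub_apply, hinner, enorm_neg]
  exact enorm_integral_rpow_le_lintegral_rpow hq (hh.1.sub aestronglyMeasurable_const)

end Jensen

section DyadicAverages

variable {E : Type*} [NormedAddCommGroup E] {g : ℝ → E}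

/-- The uniform probability measure on `(x, x + ρ]`. -/
def uniformMeasure (x ρ : ℝ) : Measure ℝ := ENNReal.ofReal ρ⁻¹ • volume.restrict (Ioc x (x + ρ))

theorem isProbabilityMeasure_uniformMeasure (x : ℝ) {ρ : ℝ} (hρ : 0 < ρ) :
    IsProbabilityMeasure (uniformMeasure x ρ) := ⟨by
  rw [uniformMeasure, Measure.smul_apply, Measure.restrict_apply_univ, Real.volume_Ioc,
    smul_eq_mul, add_sub_cancel_left, ← ENNReal.ofReal_mul (inv_nonneg.2 hρ.le),
    inv_mul_cancel₀ hρ.ne', ENNReal.ofReal_one]⟩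

theorem integral_uniformMeasure [NormedSpace ℝ E] (x : ℝ) {ρ : ℝ} (hρ : 0 < ρ) :
    ∫ y, g y ∂(uniformMeasure x ρ) = ρ⁻¹ • ∫ t in x..x + ρ, g t := by
  rw [uniformMeasure, integral_smul_measure, ENNReal.toReal_ofReal (inv_nonneg.2 hρ.le),
    intervalIntegral.integral_of_le (by linarith)]

theorem integrable_uniformMeasure (hg : ∀ a b, IntervalIntegrable g volume a b) (x : ℝ) {ρ : ℝ}
    (hρ : 0 < ρ) : Integrable g (uniformMeasure x ρ) :=
  ((intervalIntegrable_iff_integrableOn_Ioc_of_le (by linarith)).1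
    (hg x (x + ρ))).smul_measure ENNReal.ofReal_ne_top

theorem ae_norm_average_sub_le_of_halving [NormedSpace ℝ E] [CompleteSpace E]
    (hg : LocallyIntegrable g) {C R α : ℝ} (hα : 0 < α)
    (hhalf : ∀ x ρ : ℝ, 0 < ρ → ρ ≤ R →
      ‖ρ⁻¹ • (∫ t in x..x + ρ, g t) - (ρ / 2)⁻¹ • ∫ t in x..x + ρ / 2, g t‖ ≤ C * ρ ^ α) :
    ∀ᵐ x : ℝ, ∀ r : ℝ, 0 < r → r ≤ R →
      ‖r⁻¹ • (∫ t in x..x + r, g t) - g x‖ ≤ C / (1 - (1 / 2) ^ α) * r ^ α := by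
  filter_upwards [_root_.LocallyIntegrable.ae_hasDerivAt_integral hg] with x hderiv r hr hrR
  set ρ : ℕ → ℝ := fun k => r * (1 / 2) ^ k with hρ
  have hρ_pos : ∀ k, 0 < ρ k := fun k => by positivity
  have hρ_le : ∀ k, ρ k ≤ R := fun k =>
    (mul_le_of_le_one_right hr.le (pow_le_one₀ (by norm_num) (by norm_num))).trans hrR
  set A : ℕ → E := fun k => (ρ k)⁻¹ • ∫ t in x..x + ρ k, g t with hA
  have hstep : ∀ k, dist (A k) (A (k + 1)) ≤ (C * r ^ α) * ((1 / 2) ^ α) ^ k := fun k => by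
    have hρ_succ : ρ (k + 1) = ρ k / 2 := by simp only [hρ, pow_succ]; ring
    rw [dist_eq_norm]
    simp only [hA, hρ_succ]
    refine (hhalf x (ρ k) (hρ_pos k) (hρ_le k)).trans_eq ?_
    simp only [hρ]
    rw [Real.mul_rpow hr.le (by positivity), ← Real.rpow_natCast, ← Real.rpow_natCast,
      ← Real.rpow_mul (by norm_num), ← Real.rpow_mul (by norm_num), mul_comm (k : ℝ) α, mul_assoc]
  have hlim : Tendsto A atTop (𝓝 (g x)) := by
    have hρ_lim : Tendsto ρ atTop (𝓝[≠] 0) := by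
      refine tendsto_nhdsWithin_iff.2 ⟨?_, Eventually.of_forall fun k => (hρ_pos k).ne'⟩
      simpa only [mul_zero] using (tendsto_pow_atTop_nhds_zero_of_lt_one
        (by norm_num : (0 : ℝ) ≤ 1 / 2) (by norm_num)).const_mul r
    refine ((hderiv x).tendsto_slope_zero.comp hρ_lim).congr fun k => ?_
    simp [hA]
  have hgeom := dist_le_of_le_geometric_of_tendsto₀ _ _
    (Real.rpow_lt_one (by norm_num) (by norm_num) hα) hstep hlim
  simp only [hA, hρ, pow_zero, mul_one, dist_eq_norm] at hgeom
  exact hgeom.trans_eq (by ring)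

end DyadicAverages

section Slobodeckii

variable {E : Type*} [NormedAddCommGroup E] {g h : ℝ → E} {s q : ℝ}

theorem ofReal_norm_rpow (hq : 0 ≤ q) (x : E) :
    ENNReal.ofReal (‖x‖ ^ q) = ‖x‖ₑ ^ q := by
  rw [← ENNReal.ofReal_rpow_of_nonneg (norm_nonneg _) hq, ofReal_norm]

/-- The integrand of the Sobolev–Slobodeckiĭ seminorm. -/
def slobodeckiiDensity (s q : ℝ) (g : ℝ → E) (u w : ℝ) : ℝ≥0∞ :=
  ENNReal.ofReal (‖g (u + w) - g u‖ ^ q / |w| ^ (1 + q * s))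

/-- The contribution of the point `u` to the `q`-th power of the Sobolev–Slobodeckiĭ seminorm. -/
def slobodeckiiMarginal (s q : ℝ) (g : ℝ → E) (u : ℝ) : ℝ≥0∞ :=
  ∫⁻ w in Icc (-(1 / 2) : ℝ) (1 / 2), slobodeckiiDensity s q g u w

theorem measurable_slobodeckiiDensity [MeasurableSpace E] [BorelSpace E]
    [SecondCountableTopology E] (hg : Measurable g) :
    Measurable fun x : ℝ × ℝ => slobodeckiiDensity s q g x.1 x.2 := by
  unfold slobodeckiiDensity
  fun_prop

theorem measurable_slobodeckiiMarginal [MeasurableSpace E] [BorelSpace E]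
    [SecondCountableTopology E] (hg : Measurable g) : Measurable (slobodeckiiMarginal s q g) :=
  (measurable_slobodeckiiDensity hg).lintegral_prod_right'

theorem periodic_slobodeckiiMarginal (hper : Function.Periodic g 1) :
    Function.Periodic (slobodeckiiMarginal s q g) 1 := fun u => by
  simp only [slobodeckiiMarginal, slobodeckiiDensity, add_right_comm u 1, hper _]

theorem enorm_sub_rpow_le_slobodeckiiDensity (hq : 0 < q) (hs : 0 ≤ s) (u : ℝ) {w ρ : ℝ}
    (hw : |w| ≤ ρ) :
    ‖g (u + w) - g u‖ₑ ^ q ≤ ENNReal.ofReal (ρ ^ (1 + q * s)) * slobodeckiiDensity s q g u w := by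
  rcases eq_or_ne w 0 with rfl | hw0
  · simp [hq]
  have hpos : 0 < |w| := abs_pos.2 hw0
  rw [slobodeckiiDensity, ← ENNReal.ofReal_mul (Real.rpow_nonneg (hpos.le.trans hw) _),
    ← ofReal_norm_rpow hq.le]
  refine ENNReal.ofReal_le_ofReal ?_
  rw [mul_div_assoc', le_div_iff₀ (Real.rpow_pos_of_pos hpos _), mul_comm]
  gcongr

theorem slobodeckiiDensity_sub_le (hq : 1 ≤ q) (u w : ℝ) :
    slobodeckiiDensity s q (fun u => g u - h u) u w ≤
      2 ^ (q - 1) * (slobodeckiiDensity s q g u w + slobodeckiiDensity s q h u w) := by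
  have hq0 : 0 ≤ q := by linarith
  have hsplit : ∀ g : ℝ → E, slobodeckiiDensity s q g u w =
      ‖g (u + w) - g u‖ₑ ^ q * ENNReal.ofReal (|w| ^ (1 + q * s))⁻¹ := fun g => by
    rw [slobodeckiiDensity, div_eq_mul_inv, ENNReal.ofReal_mul (by positivity),
      ← ENNReal.ofReal_rpow_of_nonneg (norm_nonneg _) hq0, ofReal_norm]
  simp only [hsplit]
  rw [← add_mul, ← mul_assoc, sub_sub_sub_comm]
  gcongr
  exact (ENNReal.rpow_le_rpow enorm_sub_le hq0).trans (ENNReal.rpow_add_le_mul_rpow_add_rpow _ _ hq)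

theorem slobodeckiiMarginal_sub_le [MeasurableSpace E] [BorelSpace E]
    [SecondCountableTopology E] (hq : 1 ≤ q) (hg : Measurable g) (u : ℝ) :
    slobodeckiiMarginal s q (fun u => g u - h u) u ≤
      2 ^ (q - 1) * (slobodeckiiMarginal s q g u + slobodeckiiMarginal s q h u) := by
  have hconst : (2 : ℝ≥0∞) ^ (q - 1) ≠ ⊤ :=
    (ENNReal.rpow_lt_top_of_nonneg (by linarith) (by simp)).ne
  have hdensity : Measurable (slobodeckiiDensity s q g u) :=
    Measurable.of_uncurry_left (f := slobodeckiiDensity s q g) (measurable_slobodeckiiDensity hg)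
  simp only [slobodeckiiMarginal]
  rw [← lintegral_add_left hdensity fun w => slobodeckiiDensity s q h u w,
    ← lintegral_const_mul' _ _ hconst]
  exact lintegral_mono fun w => slobodeckiiDensity_sub_le hq u w

theorem lintegral_enorm_rpow_lt_top_of_slobodeckiiMarginal [MeasurableSpace E] [BorelSpace E]
    [SecondCountableTopology E] (hq : 1 ≤ q) (hs : 0 ≤ s) (hg : Measurable g)
    (hper : Function.Periodic g 1) {u : ℝ} (hu : slobodeckiiMarginal s q g u < ⊤) :
    ∫⁻ x in Ico (0 : ℝ) 1, ‖g x‖ₑ ^ q < ⊤ := by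
  have hq0 : 0 < q := by linarith
  have hdiff : ∫⁻ w in Ico (-(1 / 2) : ℝ) (1 / 2), ‖g (w + u) - g u‖ₑ ^ q < ⊤ := by
    rw [setLIntegral_congr Ico_ae_eq_Icc]
    refine (setLIntegral_mono' measurableSet_Icc fun w hw => ?_).trans_lt hu
    simpa [add_comm w u] using
      enorm_sub_rpow_le_slobodeckiiDensity (g := g) (ρ := 1) hq0 hs u
        (w := w) (abs_le.2 ⟨by linarith [hw.1], by linarith [hw.2]⟩)
  have hconst : ∫⁻ _ in Ico (-(1 / 2) : ℝ) (1 / 2), ‖g u‖ₑ ^ q < ⊤ := by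
    rw [setLIntegral_const]
    exact ENNReal.mul_lt_top (ENNReal.rpow_lt_top_of_nonneg hq0.le enorm_ne_top) (by simp)
  have hshift : ∫⁻ w in Ico (-(1 / 2) : ℝ) (1 / 2), ‖g (w + u)‖ₑ ^ q < ⊤ := by
    refine (lintegral_mono fun w => ?_).trans_lt
      (ENNReal.lintegral_rpow_add_lt_top_of_lintegral_rpow_lt_top
        (f := fun w => ‖g (w + u) - g u‖ₑ) (g := fun _ => ‖g u‖ₑ) (by fun_prop) hdiff hconst hq)
    exact ENNReal.rpow_le_rpow (by simpa using enorm_add_le (g (w + u) - g u) (g u)) hq0.le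
  have hper' : Function.Periodic (fun x => ‖g x‖ₑ ^ q) 1 := fun x => by simp only [hper x]
  rwa [setLIntegral_Ico_comp_add (fun x => ‖g x‖ₑ ^ q),
    show (1 / 2 : ℝ) + u = -(1 / 2) + u + 1 by ring,
    setLIntegral_Ico_eq_of_periodic hper' _ 0, zero_add] at hshift

end Slobodeckii

section SobolevCurves

variable {n : ℕ} {s q : ℝ} {f f' h h' : ℝ → EuclideanSpace ℝ (Fin n)}

/-- The Sobolev–Slobodeckiĭ seminorm of a curve with derivative `f'`. -/
def sobSeminorm (s q : ℝ) (f' : ℝ → EuclideanSpace ℝ (Fin n)) : ℝ :=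
  (sobSemiPow s q f').toReal ^ (1 / q)

theorem sobSeminorm_nonneg (s q : ℝ) (f' : ℝ → EuclideanSpace ℝ (Fin n)) :
    0 ≤ sobSeminorm s q f' := by
  unfold sobSeminorm
  positivity

theorem sobNorm_nonneg (s q : ℝ) (f f' : ℝ → EuclideanSpace ℝ (Fin n)) : 0 ≤ sobNorm s q f f' := by
  unfold sobNorm
  positivity

theorem sobSeminorm_le_sobNorm (s q : ℝ) (f f' : ℝ → EuclideanSpace ℝ (Fin n)) :
    sobSeminorm s q f' ≤ sobNorm s q f f' :=
  le_add_of_nonneg_left (by positivity)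

theorem rpow_integral_norm_deriv_le_sobNorm (s q : ℝ) (f f' : ℝ → EuclideanSpace ℝ (Fin n)) :
    (∫ u in Ico (0 : ℝ) 1, ‖f' u‖ ^ q) ^ (1 / q) ≤ sobNorm s q f f' := by
  rw [sobNorm, add_right_comm]
  exact le_add_of_nonneg_left (by positivity)

theorem sobSemiPow_eq_ofReal (hq : 0 < q) (hf : sobSemiPow s q f' < ⊤) :
    sobSemiPow s q f' = ENNReal.ofReal (sobSeminorm s q f' ^ q) := by
  rw [sobSeminorm, ← Real.rpow_mul ENNReal.toReal_nonneg, one_div_mul_cancel hq.ne',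
    Real.rpow_one, ENNReal.ofReal_toReal hf.ne]

theorem sobSemiPow_sub_lt_top (hq : 1 ≤ q) (hf' : Measurable f')
    (hf : sobSemiPow s q f' < ⊤) (hh : sobSemiPow s q h' < ⊤) :
    sobSemiPow s q (fun u => f' u - h' u) < ⊤ := by
  have hconst : (2 : ℝ≥0∞) ^ (q - 1) ≠ ⊤ :=
    (ENNReal.rpow_lt_top_of_nonneg (by linarith) (by simp)).ne
  refine (lintegral_mono fun u => slobodeckiiMarginal_sub_le hq hf' u).trans_lt ?_
  rw [lintegral_const_mul' _ _ hconst, lintegral_add_left (measurable_slobodeckiiMarginal hf')]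
  exact ENNReal.mul_lt_top hconst.lt_top (ENNReal.add_lt_top.2 ⟨hf, hh⟩)

theorem lintegral_slobodeckiiDensity_sub_le (hper : Function.Periodic f' 1) (x : ℝ) {ρ : ℝ}
    (hρ : ρ ≤ 1 / 2) :
    ∫⁻ y in Ioc x (x + ρ), ∫⁻ z in Ioc x (x + ρ), slobodeckiiDensity s q f' y (z - y) ≤
      sobSemiPow s q f' := by
  have hinner : ∀ y ∈ Ioc x (x + ρ), ∫⁻ z in Ioc x (x + ρ), slobodeckiiDensity s q f' y (z - y) ≤
      slobodeckiiMarginal s q f' y := fun y hy => by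
    rw [slobodeckiiMarginal, ← (measurePreserving_sub_right volume y).setLIntegral_comp_preimage_emb
      (measurableEmbedding_subRight y) (slobodeckiiDensity s q f' y) (Icc (-(1 / 2)) (1 / 2))]
    refine lintegral_mono_set fun z hz => ?_
    simp only [mem_Ioc, mem_preimage, mem_Icc] at *
    constructor <;> linarith
  calc _ ≤ ∫⁻ y in Ioc x (x + ρ), slobodeckiiMarginal s q f' y :=
        setLIntegral_mono' measurableSet_Ioc hinner
    _ ≤ ∫⁻ y in Ioc x (x + 1), slobodeckiiMarginal s q f' y :=
        lintegral_mono_set (Ioc_subset_Ioc_right (by linarith))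
    _ = ∫⁻ y in Ico (0 : ℝ) 1, slobodeckiiMarginal s q f' y := by
        rw [setLIntegral_congr Ico_ae_eq_Ioc.symm,
          setLIntegral_Ico_eq_of_periodic (periodic_slobodeckiiMarginal hper) x 0, zero_add]

theorem lintegral_lintegral_enorm_sub_rpow_le (hq : 0 < q) (hs : 0 ≤ s)
    (hper : Function.Periodic f' 1) (x : ℝ) {ρ : ℝ} (hρ : ρ ≤ 1 / 2) :
    ∫⁻ y in Ioc x (x + ρ), ∫⁻ z in Ioc x (x + ρ), ‖f' z - f' y‖ₑ ^ q ≤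
      ENNReal.ofReal (ρ ^ (1 + q * s)) * sobSemiPow s q f' := by
  refine le_trans ?_ (mul_le_mul_right (lintegral_slobodeckiiDensity_sub_le hper x hρ) _)
  rw [← lintegral_const_mul' _ _ ENNReal.ofReal_ne_top]
  refine setLIntegral_mono' measurableSet_Ioc fun y hy => ?_
  rw [← lintegral_const_mul' _ _ ENNReal.ofReal_ne_top]
  refine setLIntegral_mono' measurableSet_Ioc fun z hz => ?_
  simpa using enorm_sub_rpow_le_slobodeckiiDensity (g := f') hq hs y (w := z - y) (ρ := ρ)
    (abs_le.2 ⟨by linarith [hy.2, hz.1], by linarith [hy.1, hz.2]⟩)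

namespace InW

theorem lintegral_enorm_rpow_lt_top (hq : 1 ≤ q) (hs : 0 ≤ s) (hf : InW s q f f') :
    ∫⁻ u in Ico (0 : ℝ) 1, ‖f' u‖ₑ ^ q < ⊤ := by
  have hae := ae_lt_top (measurable_slobodeckiiMarginal hf.1.meas') (ne_of_lt hf.2)
  have : (ae (volume.restrict (Ico (0 : ℝ) 1))).NeBot := by
    rw [ae_neBot]
    simp
  obtain ⟨u, hu⟩ := hae.exists
  exact lintegral_enorm_rpow_lt_top_of_slobodeckiiMarginal hq hs hf.1.meas' hf.1.periodic' hu

theorem intervalIntegrable (hq : 1 < q) (hs : 0 ≤ s) (hf : InW s q f f') (a b : ℝ) :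
    IntervalIntegrable f' volume a b := by
  refine hf.1.periodic'.intervalIntegrable (t := 0) one_pos.ne' ?_ a b
  rw [zero_add, intervalIntegrable_iff_integrableOn_Ico_of_le zero_le_one]
  have : IsProbabilityMeasure (volume.restrict (Ico (0 : ℝ) 1)) := ⟨by simp⟩
  have hJensen := rpow_lintegral_le_lintegral_rpow (volume.restrict (Ico (0 : ℝ) 1)) hq
    hf.1.meas'.enorm.aemeasurable
  exact ⟨hf.1.meas'.aestronglyMeasurable, (ENNReal.rpow_lt_top_iff_of_pos (by linarith)).1
    (hJensen.trans_lt (hf.lintegral_enorm_rpow_lt_top hq.le hs))⟩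

theorem locallyIntegrable (hq : 1 < q) (hs : 0 ≤ s) (hf : InW s q f f') : LocallyIntegrable f' :=
  fun x => ⟨Ioc (x - 1) (x + 1), Ioc_mem_nhds (by linarith) (by linarith),
    (intervalIntegrable_iff_integrableOn_Ioc_of_le (by linarith)).1
      (hf.intervalIntegrable hq hs _ _)⟩

theorem sub_eq_integral (hq : 1 < q) (hs : 0 ≤ s) (hf : InW s q f f') (x y : ℝ) :
    f y - f x = ∫ t in x..y, f' t := by
  rw [hf.1.primitive y, hf.1.primitive x, ← intervalIntegral.integral_interval_sub_left
    (hf.intervalIntegrable hq hs 0 y) (hf.intervalIntegrable hq hs 0 x), add_sub_add_left_eq_sub]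

theorem continuous (hq : 1 < q) (hs : 0 ≤ s) (hf : InW s q f f') : Continuous f := by
  rw [show f = fun u => f 0 + ∫ t in (0 : ℝ)..u, f' t from funext hf.1.primitive]
  exact continuous_const.add
    (intervalIntegral.continuous_primitive (hf.intervalIntegrable hq hs) 0)

theorem ae_hasDerivAt (hq : 1 < q) (hs : 0 ≤ s) (hf : InW s q f f') :
    ∀ᵐ x : ℝ, HasDerivAt f (f' x) x := by
  filter_upwards [_root_.LocallyIntegrable.ae_hasDerivAt_integral (hf.locallyIntegrable hq hs)]
    with x hx
  rw [show f = fun u => f 0 + ∫ t in (0 : ℝ)..u, f' t from funext hf.1.primitive]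
  exact (hx 0).const_add (f 0)

theorem sub (hq : 1 < q) (hs : 0 ≤ s) (hf : InW s q f f') (hh : InW s q h h') :
    InW s q (fun u => f u - h u) (fun u => f' u - h' u) where
  left :=
    { periodic := fun x => by simp only [hf.1.periodic x, hh.1.periodic x]
      periodic' := fun x => by simp only [hf.1.periodic' x, hh.1.periodic' x]
      meas' := hf.1.meas'.sub hh.1.meas'
      primitive := fun u => by
        rw [intervalIntegral.integral_sub (hf.intervalIntegrable hq hs 0 u)
          (hh.intervalIntegrable hq hs 0 u), ← hf.sub_eq_integral hq hs, ← hh.sub_eq_integral hq hs]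
        abel }
  right := sobSemiPow_sub_lt_top hq.le hf.1.meas' hf.2 hh.2

theorem norm_sub_le_of_ae_bound (hq : 1 < q) (hs : 0 ≤ s) (hf : InW s q f f') {M : ℝ}
    (hM : ∀ᵐ x : ℝ, ‖f' x‖ ≤ M) (x y : ℝ) : ‖f y - f x‖ ≤ M * |y - x| := by
  rw [hf.sub_eq_integral hq hs]
  exact intervalIntegral.norm_integral_le_of_norm_le_const_ae (hM.mono fun t ht _ => ht)

theorem enorm_average_sub_average_rpow_le (hq : 1 < q) (hs : 0 ≤ s) (hf : InW s q f f') (x : ℝ)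
    {ρ : ℝ} (hρ : 0 < ρ) (hρ' : ρ ≤ 1 / 2) :
    ‖ρ⁻¹ • (∫ t in x..x + ρ, f' t) - (ρ / 2)⁻¹ • ∫ t in x..x + ρ / 2, f' t‖ₑ ^ q ≤
      ENNReal.ofReal (2 * ρ ^ (q * s - 1)) * sobSemiPow s q f' := by
  have hρ2 : 0 < ρ / 2 := by linarith
  have := isProbabilityMeasure_uniformMeasure x hρ
  have := isProbabilityMeasure_uniformMeasure x hρ2
  have hint : ∀ {r : ℝ}, 0 < r → Integrable f' (uniformMeasure x r) :=
    integrable_uniformMeasure (hf.intervalIntegrable hq hs) x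
  have hconst : ENNReal.ofReal (2 * ρ ^ (q * s - 1)) =
      ENNReal.ofReal ρ⁻¹ * (ENNReal.ofReal (ρ / 2)⁻¹ * ENNReal.ofReal (ρ ^ (1 + q * s))) := by
    rw [← ENNReal.ofReal_mul (by positivity), ← ENNReal.ofReal_mul (by positivity),
      show q * s - 1 = (1 + q * s) - 2 by ring, Real.rpow_sub hρ, Real.rpow_two]
    congr 1
    field_simp
  rw [← integral_uniformMeasure x hρ, ← integral_uniformMeasure x hρ2]
  refine (enorm_integral_sub_integral_rpow_le hq (hint hρ) (hint hρ2)).trans ?_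
  simp only [uniformMeasure, lintegral_smul_measure, smul_eq_mul]
  rw [lintegral_const_mul' _ _ ENNReal.ofReal_ne_top, hconst, mul_assoc, mul_assoc]
  gcongr
  refine le_trans (lintegral_mono fun y => lintegral_mono_set (Ioc_subset_Ioc_right ?_))
    (lintegral_lintegral_enorm_sub_rpow_le (by linarith) hs hf.1.periodic' x hρ')
  linarith

theorem norm_average_sub_average_le (hq : 1 < q) (hs : 0 ≤ s) (hf : InW s q f f') (x : ℝ)
    {ρ : ℝ} (hρ : 0 < ρ) (hρ' : ρ ≤ 1 / 2) :
    ‖ρ⁻¹ • (∫ t in x..x + ρ, f' t) - (ρ / 2)⁻¹ • ∫ t in x..x + ρ / 2, f' t‖ ≤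
      2 * sobSeminorm s q f' * ρ ^ (s - 1 / q) := by
  have hq0 : 0 < q := by linarith
  have hS := sobSeminorm_nonneg s q f'
  have hpow := hf.enorm_average_sub_average_rpow_le hq hs x hρ hρ'
  rw [← ofReal_norm_rpow hq0.le, sobSemiPow_eq_ofReal hq0 hf.2,
    ← ENNReal.ofReal_mul (by positivity), ENNReal.ofReal_le_ofReal_iff (by positivity)] at hpow
  refine (Real.rpow_le_rpow_iff (norm_nonneg _) (by positivity) hq0).1 (hpow.trans ?_)
  rw [Real.mul_rpow (by positivity) (by positivity), Real.mul_rpow two_pos.le hS,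
    ← Real.rpow_mul hρ.le, show (s - 1 / q) * q = q * s - 1 by field_simp, mul_right_comm]
  gcongr
  simpa using Real.rpow_le_rpow_of_exponent_le one_le_two hq.le

theorem ae_norm_average_sub_le (hq : 1 < q) (hs : 1 / q < s) (hf : InW s q f f') :
    ∀ᵐ x : ℝ, ∀ r : ℝ, 0 < r → r ≤ 1 / 2 → ‖r⁻¹ • (f (x + r) - f x) - f' x‖ ≤
      2 * sobSeminorm s q f' / (1 - (1 / 2) ^ (s - 1 / q)) * r ^ (s - 1 / q) := by
  have hs0 : 0 ≤ s := le_trans (by positivity) hs.le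
  simp only [hf.sub_eq_integral hq hs0]
  exact ae_norm_average_sub_le_of_halving (hf.locallyIntegrable hq hs0) (by linarith)
    fun x ρ hρ hρ' => hf.norm_average_sub_average_le hq hs0 x hρ hρ'

theorem enorm_sub_le_lintegral (hq : 1 < q) (hs : 0 ≤ s) (hf : InW s q f f') (x : ℝ) {t : ℝ}
    (ht0 : 0 ≤ t) (ht1 : t ≤ 1) : ‖f (x + t) - f x‖ₑ ≤ ∫⁻ u in Ico (0 : ℝ) 1, ‖f' u‖ₑ := by
  have hper : Function.Periodic (fun u => ‖f' u‖ₑ) 1 := fun x => by simp only [hf.1.periodic' x]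
  calc ‖f (x + t) - f x‖ₑ = ‖∫ u in Ioc x (x + t), f' u‖ₑ := by
        rw [hf.sub_eq_integral hq hs, intervalIntegral.integral_of_le (by linarith)]
    _ ≤ ∫⁻ u in Ioc x (x + t), ‖f' u‖ₑ := enorm_integral_le_lintegral_enorm _
    _ ≤ ∫⁻ u in Ioc x (x + 1), ‖f' u‖ₑ :=
        lintegral_mono_set (Ioc_subset_Ioc_right (by linarith))
    _ = ∫⁻ u in Ico (0 : ℝ) 1, ‖f' u‖ₑ := by
        rw [setLIntegral_congr Ico_ae_eq_Ioc.symm, setLIntegral_Ico_eq_of_periodic hper x 0,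
          zero_add]

theorem norm_sub_le_sobNorm (hq : 1 < q) (hs : 0 ≤ s) (hf : InW s q f f') (x : ℝ) {t : ℝ}
    (ht0 : 0 ≤ t) (ht1 : t ≤ 1) : ‖f (x + t) - f x‖ ≤ sobNorm s q f f' := by
  have hq0 : 0 < q := by linarith
  have : IsProbabilityMeasure (volume.restrict (Ico (0 : ℝ) 1)) := ⟨by simp⟩
  have hint : ENNReal.ofReal (∫ u in Ico (0 : ℝ) 1, ‖f' u‖ ^ q) =
      ∫⁻ u in Ico (0 : ℝ) 1, ‖f' u‖ₑ ^ q := by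
    rw [integral_eq_lintegral_of_nonneg_ae (Eventually.of_forall fun u => by positivity)
      (hf.1.meas'.norm.pow_const q).aestronglyMeasurable]
    simp only [ofReal_norm_rpow hq0.le]
    exact ENNReal.ofReal_toReal (hf.lintegral_enorm_rpow_lt_top hq.le hs).ne
  have hpow : ‖f (x + t) - f x‖ₑ ^ q ≤ ∫⁻ u in Ico (0 : ℝ) 1, ‖f' u‖ₑ ^ q :=
    (ENNReal.rpow_le_rpow (hf.enorm_sub_le_lintegral hq hs x ht0 ht1) hq0.le).trans
      (rpow_lintegral_le_lintegral_rpow _ hq hf.1.meas'.enorm.aemeasurable)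
  rw [← hint, ← ofReal_norm_rpow hq0.le, ENNReal.ofReal_le_ofReal_iff (by positivity)] at hpow
  refine le_trans ?_ (rpow_integral_norm_deriv_le_sobNorm s q f f')
  rwa [one_div, Real.le_rpow_inv_iff_of_pos (norm_nonneg _) (by positivity) hq0]

end InW

theorem exists_ae_norm_deriv_le_sobNorm (n : ℕ) (hq : 1 < q) (hs : 1 / q < s) :
    ∃ C : ℝ, 0 ≤ C ∧ ∀ f f' : ℝ → EuclideanSpace ℝ (Fin n), InW s q f f' →
      ∀ᵐ x : ℝ, ‖f' x‖ ≤ C * sobNorm s q f f' := by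
  have hs0 : 0 ≤ s := le_trans (by positivity) hs.le
  have hgap : 0 < 1 - ((1 : ℝ) / 2) ^ (s - 1 / q) :=
    sub_pos.2 (Real.rpow_lt_one (by norm_num) (by norm_num) (by linarith))
  refine ⟨2 + 2 / (1 - (1 / 2) ^ (s - 1 / q)) * (1 / 2) ^ (s - 1 / q), by positivity,
    fun f f' hf => ?_⟩
  filter_upwards [hf.ae_norm_average_sub_le hq hs] with x hx
  have hchord : ‖((1 : ℝ) / 2)⁻¹ • (f (x + 1 / 2) - f x)‖ ≤ 2 * sobNorm s q f f' := by
    rw [norm_smul, norm_inv, Real.norm_of_nonneg (by norm_num), one_div, inv_inv]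
    gcongr
    simpa only [one_div] using
      hf.norm_sub_le_sobNorm hq hs0 x (t := 1 / 2) (by norm_num) (by norm_num)
  calc ‖f' x‖ ≤ ‖((1 : ℝ) / 2)⁻¹ • (f (x + 1 / 2) - f x)‖
        + ‖((1 : ℝ) / 2)⁻¹ • (f (x + 1 / 2) - f x) - f' x‖ := norm_le_norm_add_norm_sub _ _
    _ ≤ 2 * sobNorm s q f f' + 2 * sobNorm s q f f' / (1 - (1 / 2) ^ (s - 1 / q))
        * (1 / 2) ^ (s - 1 / q) := by
      gcongr
      refine (hx (1 / 2) (by norm_num) le_rfl).trans ?_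
      gcongr
      exact sobSeminorm_le_sobNorm s q f f'
    _ = _ := by ring

end SobolevCurves

section BiLipschitz

variable {n : ℕ} {s q : ℝ} {f f' : ℝ → EuclideanSpace ℝ (Fin n)}

/-- The map `f` is bi-Lipschitz from below, with constant `c`, on arcs of length at most `2 / 3`.
Every two points of the circle are joined by such an arc, and so are any two neighbours among three
points when the third arc between these is the longest one. -/
def ChordLowerBound (c : ℝ) (f : ℝ → EuclideanSpace ℝ (Fin n)) : Prop :=
  ∀ x t : ℝ, 0 ≤ t → t ≤ 2 / 3 → c * t ≤ ‖f (x + t) - f x‖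

theorem InjCircle.ne_of_mem_Ioo (hf : InjCircle f) (x : ℝ) {t : ℝ} (ht : t ∈ Ioo (0 : ℝ) 1) :
    f (x + t) ≠ f x := fun heq => by
  obtain ⟨k, hk⟩ := hf _ _ heq
  have hneg : (k : ℝ) < 0 := by linarith [ht.1]
  have hgt : (-1 : ℝ) < k := by linarith [ht.2]
  have hneg' : k < 0 := by exact_mod_cast hneg
  have hgt' : -1 < k := by exact_mod_cast hgt
  omega

theorem InjCircle.exists_le_norm_sub (hf : InjCircle f) (hper : Function.Periodic f 1)
    (hcont : Continuous f) {r : ℝ} (hr : 0 < r) (hr' : r ≤ 2 / 3) :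
    ∃ m : ℝ, 0 < m ∧ ∀ x t, r ≤ t → t ≤ 2 / 3 → m ≤ ‖f (x + t) - f x‖ := by
  have hfract : ∀ x t, ‖f (x + t) - f x‖ = ‖f (Int.fract x + t) - f (Int.fract x)‖ := by
    intro x t
    have hshift : ∀ y : ℝ, f (y - ⌊x⌋) = f y := fun y => by
      simpa using hper.sub_zsmul_eq (x := y) ⌊x⌋
    rw [← Int.self_sub_floor, hshift, sub_add_eq_add_sub, hshift]
  obtain ⟨z, hz, hmin⟩ := (isCompact_Icc.prod isCompact_Icc).exists_isMinOn
    (s := Icc (0 : ℝ) 1 ×ˢ Icc r (2 / 3)) ⟨(0, r), ⟨by simp, ⟨le_rfl, hr'⟩⟩⟩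
    (f := fun z : ℝ × ℝ => ‖f (z.1 + z.2) - f z.1‖) (by fun_prop)
  refine ⟨_, norm_pos_iff.2 (sub_ne_zero.2 (hf.ne_of_mem_Ioo z.1
    ⟨hr.trans_le hz.2.1, by linarith [hz.2.2]⟩)), fun x t ht ht' => ?_⟩
  rw [hfract x t]
  exact hmin (a := (Int.fract x, t)) ⟨⟨Int.fract_nonneg x, (Int.fract_lt_one x).le⟩, ht, ht'⟩

theorem InW.exists_mul_le_norm_sub (hq : 1 < q) (hs : 1 / q < s) (hf : InW s q f f') {c : ℝ}
    (hc : 0 < c) (hreg : ∀ᵐ u : ℝ, c ≤ ‖f' u‖) :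
    ∃ r : ℝ, 0 < r ∧ r ≤ 1 / 2 ∧ ∀ x t, 0 < t → t ≤ r → c / 2 * t ≤ ‖f (x + t) - f x‖ := by
  have hα : 0 < s - 1 / q := by linarith
  set K := 2 * sobSeminorm s q f' / (1 - (1 / 2) ^ (s - 1 / q))
  have hcont := hf.continuous hq (le_trans (by positivity) hs.le)
  have hsmall : ∀ᶠ t in 𝓝 (0 : ℝ), K * t ^ (s - 1 / q) < c / 2 := by
    refine Tendsto.eventually_lt_const (half_pos hc) ?_
    simpa only [Real.zero_rpow hα.ne', mul_zero] using
      ((Real.continuous_rpow_const hα.le).tendsto 0).const_mul K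
  obtain ⟨ε, hε, hball⟩ := Metric.eventually_nhds_iff.1 hsmall
  refine ⟨min (ε / 2) (1 / 2), by positivity, min_le_right _ _, fun x t ht ht' => ?_⟩
  have htε : K * t ^ (s - 1 / q) < c / 2 := hball (by
    rw [Real.dist_eq, sub_zero, abs_of_pos ht]
    linarith [ht'.trans (min_le_left _ _)])
  have hclosed : IsClosed {x | c / 2 * t ≤ ‖f (x + t) - f x‖} :=
    isClosed_le continuous_const (by fun_prop)
  have hdense : Dense {x | c / 2 * t ≤ ‖f (x + t) - f x‖} := by
    refine Measure.dense_of_ae (μ := volume) ?_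
    filter_upwards [hreg, hf.ae_norm_average_sub_le hq hs] with x hx₁ hx₂
    have hquot := norm_le_norm_add_norm_sub (t⁻¹ • (f (x + t) - f x)) (f' x)
    rw [norm_smul, norm_inv, Real.norm_of_nonneg ht.le] at hquot
    have hle : c / 2 ≤ t⁻¹ * ‖f (x + t) - f x‖ := by
      linarith [hx₂ t ht (ht'.trans (min_le_right _ _))]
    rwa [inv_mul_eq_div, le_div_iff₀ ht] at hle
  exact (hclosed.closure_eq ▸ hdense x :)

theorem InU.exists_chordLowerBound (hq : 1 < q) (hs : 1 / q < s) (hf : InU s q f f') :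
    ∃ c : ℝ, 0 < c ∧ ChordLowerBound c f := by
  obtain ⟨hW, hinj, c, hc, hreg⟩ := hf
  obtain ⟨r, hr, hr', hshort⟩ := hW.exists_mul_le_norm_sub hq hs hc hreg
  obtain ⟨m, hm, hlong⟩ := hinj.exists_le_norm_sub hW.1.periodic
    (hW.continuous hq (le_trans (by positivity) hs.le)) hr (by linarith)
  refine ⟨min (c / 2) m, by positivity, fun x t ht ht' => ?_⟩
  rcases ht.eq_or_lt with rfl | ht
  · simp
  rcases le_total t r with htr | htr
  · exact (mul_le_mul_of_nonneg_right (min_le_left _ _) ht.le).trans (hshort x t ht htr)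
  · exact (mul_le_of_le_one_right (by positivity) (by linarith)).trans
      ((min_le_right _ _).trans (hlong x t htr ht'))

namespace ChordLowerBound

variable {c : ℝ}

theorem ae_le_norm_deriv (hf : ChordLowerBound c f) (hder : ∀ᵐ x : ℝ, HasDerivAt f (f' x) x) :
    ∀ᵐ x : ℝ, c ≤ ‖f' x‖ := by
  filter_upwards [hder] with x hx
  refine ge_of_tendsto (hx.tendsto_slope_zero_right.norm) ?_
  filter_upwards [Ioo_mem_nhdsGT (show (0 : ℝ) < 2 / 3 by norm_num)] with t ht
  rw [norm_smul, norm_inv, Real.norm_of_nonneg ht.1.le, inv_mul_eq_div, le_div_iff₀ ht.1]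
  exact hf x t ht.1.le ht.2.le

theorem injCircle (hf : ChordLowerBound c f) (hc : 0 < c) (hper : Function.Periodic f 1) :
    InjCircle f := by
  intro u v huv
  set t := Int.fract (v - u) with ht
  have ht0 : 0 ≤ t := Int.fract_nonneg _
  have ht1 : t < 1 := Int.fract_lt_one _
  have htu : f (u + t) = f u := by
    rw [huv, ← hper.sub_zsmul_eq (x := v) ⌊v - u⌋, ht, ← Int.self_sub_floor, zsmul_one]
    congr 1
    ring
  have hzero : ∀ x r : ℝ, 0 ≤ r → r ≤ 2 / 3 → f (x + r) = f x → r = 0 := fun x r hr hr' heq => by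
    have hle := hf x r hr hr'
    rw [heq, sub_self, norm_zero] at hle
    nlinarith
  have ht_eq : t = 0 := by
    rcases le_total t (2 / 3) with hle | hle
    · exact hzero u t ht0 hle htu
    · have hcompl := hzero (u + t) (1 - t) (by linarith) (by linarith)
        (by rw [htu, ← hper u]; congr 1; ring)
      linarith
  refine ⟨⌊v - u⌋, ?_⟩
  have hfloor := Int.self_sub_floor (v - u)
  rw [← ht, ht_eq] at hfloor
  linarith

theorem inU (hf : ChordLowerBound c f) (hc : 0 < c) (hq : 1 < q) (hs : 0 ≤ s)
    (hW : InW s q f f') : InU s q f f' :=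
  ⟨hW, hf.injCircle hc hW.1.periodic, c, hc, hf.ae_le_norm_deriv (hW.ae_hasDerivAt hq hs)⟩

theorem half_of_norm_sub_le (hf : ChordLowerBound c f) {h : ℝ → EuclideanSpace ℝ (Fin n)}
    (hLip : ∀ x y, ‖(h y - f y) - (h x - f x)‖ ≤ c / 2 * |y - x|) :
    ChordLowerBound (c / 2) h := fun x t ht ht' => by
  have hdiff := hLip x (x + t)
  rw [add_sub_cancel_left, abs_of_nonneg ht] at hdiff
  have htri := norm_le_norm_add_norm_sub (h (x + t) - h x) (f (x + t) - f x)
  rw [sub_sub_sub_comm] at htri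
  linarith [hf x t ht ht']

end ChordLowerBound

theorem InU.exists_uniform_chordLowerBound (hq : 1 < q) (hs : 1 / q < s) (hf : InU s q f f') :
    ∃ ε c : ℝ, 0 < ε ∧ 0 < c ∧ ∀ h h' : ℝ → EuclideanSpace ℝ (Fin n), InW s q h h' →
      sobNorm s q (fun u => h u - f u) (fun u => h' u - f' u) < ε → ChordLowerBound c h := by
  have hs0 : 0 ≤ s := le_trans (by positivity) hs.le
  obtain ⟨c, hc, hchord⟩ := hf.exists_chordLowerBound hq hs
  obtain ⟨C, hC, hemb⟩ := exists_ae_norm_deriv_le_sobNorm n hq hs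
  refine ⟨c / 2 / (C + 1), c / 2, by positivity, by positivity, fun h h' hh hlt => ?_⟩
  have hsub := hh.sub hq hs0 hf.1
  refine hchord.half_of_norm_sub_le (hsub.norm_sub_le_of_ae_bound hq hs0 ?_)
  filter_upwards [hemb _ _ hsub] with x hx
  rw [lt_div_iff₀ (by positivity)] at hlt
  nlinarith [sobNorm_nonneg s q (fun u => h u - f u) (fun u => h' u - f' u)]

end BiLipschitz

section BetaIntegral

theorem setLIntegral_Ioo_comp_mul {c : ℝ} (hc : 0 < c) (b : ℝ) (f : ℝ → ℝ≥0∞) :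
    ∫⁻ x in Ioo 0 b, f (c * x) = ENNReal.ofReal c⁻¹ * ∫⁻ x in Ioo 0 (c * b), f x := by
  have hpre : (fun x => c * x) ⁻¹' Ioo 0 (c * b) = Ioo 0 b := by
    ext x
    simp only [mem_preimage, mem_Ioo, mul_pos_iff_of_pos_left hc, mul_lt_mul_iff_right₀ hc]
  have hemb : MeasurableEmbedding fun x : ℝ => c * x := measurableEmbedding_mulLeft₀ hc.ne'
  rw [← hpre, ← hemb.lintegral_map, ← hemb.restrict_map, Real.map_volume_mul_left hc.ne',
    Measure.restrict_smul, lintegral_smul_measure, abs_of_pos (inv_pos.2 hc), smul_eq_mul]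

theorem lintegral_mul_one_sub_rpow_lt_top {e : ℝ} (he : -1 < e) :
    ∫⁻ σ in Ioo (0 : ℝ) 1, ENNReal.ofReal ((σ * (1 - σ)) ^ e) < ⊤ := by
  have hu : 0 < ((e + 1 : ℝ) : ℂ).re := by simpa using by linarith
  have hbeta := ((intervalIntegrable_iff_integrableOn_Ioo_of_le zero_le_one).1
    (Complex.betaIntegral_convergent hu hu)).2
  refine (setLIntegral_mono' measurableSet_Ioo fun σ hσ => ?_).trans_lt hbeta
  have hσ' : 0 < 1 - σ := sub_pos.2 hσ.2
  have hcast : 1 - (σ : ℂ) = ((1 - σ : ℝ) : ℂ) := by push_cast; rfl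
  rw [← ofReal_norm, norm_mul, hcast, Complex.norm_cpow_eq_rpow_re_of_pos hσ.1,
    Complex.norm_cpow_eq_rpow_re_of_pos hσ',
    Real.mul_rpow hσ.1.le hσ'.le]
  simp

theorem lintegral_mul_sub_rpow (e : ℝ) {t : ℝ} (ht : 0 < t) :
    ∫⁻ a in Ioo 0 t, ENNReal.ofReal ((a * (t - a)) ^ e) =
      ENNReal.ofReal (t ^ (2 * e + 1)) *
        ∫⁻ σ in Ioo (0 : ℝ) 1, ENNReal.ofReal ((σ * (1 - σ)) ^ e) := by
  have hscale := setLIntegral_Ioo_comp_mul (inv_pos.2 ht) t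
    fun σ => ENNReal.ofReal ((σ * (1 - σ)) ^ e)
  rw [inv_inv, inv_mul_cancel₀ ht.ne'] at hscale
  rw [Real.rpow_add_one ht.ne', ENNReal.ofReal_mul (by positivity), mul_assoc, ← hscale,
    ← lintegral_const_mul' _ _ ENNReal.ofReal_ne_top]
  refine setLIntegral_congr_fun measurableSet_Ioo fun a ha => ?_
  have ha' : 0 < t - a := sub_pos.2 ha.2
  have hfactor : t⁻¹ * a * (1 - t⁻¹ * a) = (a * (t - a)) / t ^ 2 := by field_simp
  rw [hfactor, ← ENNReal.ofReal_mul (by positivity), Real.rpow_mul ht.le, Real.rpow_two,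
    ← Real.mul_rpow (by positivity) (div_nonneg (mul_nonneg ha.1.le ha'.le) (by positivity)),
    mul_div_cancel₀ _ (by positivity)]

theorem setLIntegral_arcDomain_comp_add_le {J : ℝ × ℝ → ℝ≥0∞} (hJ : Measurable J) :
    ∫⁻ d in arcDomain, J (d.1, d.1 + d.2) ≤
      ∫⁻ t in Ioo (0 : ℝ) (2 / 3), ∫⁻ a in Ioo 0 t, J (a, t) := by
  set T : Set (ℝ × ℝ) := {z | z.2 ∈ Ioo (0 : ℝ) (2 / 3) ∧ z.1 ∈ Ioo 0 z.2} with hT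
  have hTm : MeasurableSet T := by
    simp only [hT, mem_Ioo]
    measurability
  have hsub : arcDomain ⊆ (fun d : ℝ × ℝ => (d.1, d.1 + d.2)) ⁻¹' T := by
    rintro ⟨a, b⟩ ⟨ha, hb, hab, hba⟩
    dsimp only at ha hb hab hba
    refine ⟨⟨?_, ?_⟩, ?_, ?_⟩ <;> dsimp only <;> linarith
  have hslice : ∀ t a : ℝ, T.indicator J (a, t) =
      (Ioo (0 : ℝ) (2 / 3)).indicator (fun t => (Ioo 0 t).indicator (fun a => J (a, t)) a) t :=
    fun t a => by
      by_cases ht : t ∈ Ioo (0 : ℝ) (2 / 3) <;> by_cases ha : a ∈ Ioo 0 t <;>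
        simp only [indicator, hT, mem_ofPred_eq, ht, ha, and_true, and_false, if_true,
          if_false]
  calc ∫⁻ d in arcDomain, J (d.1, d.1 + d.2)
      ≤ ∫⁻ d in (fun d : ℝ × ℝ => (d.1, d.1 + d.2)) ⁻¹' T, J (d.1, d.1 + d.2) :=
        lintegral_mono_set hsub
    _ = ∫⁻ z in T, J z :=
        (measurePreserving_prod_add volume volume).setLIntegral_comp_preimage hTm hJ
    _ = ∫⁻ t, ∫⁻ a, T.indicator J (a, t) := by
        rw [← lintegral_indicator hTm, Measure.volume_eq_prod,
          lintegral_prod_symm _ (hJ.indicator hTm).aemeasurable]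
    _ = _ := by
        rw [← lintegral_indicator measurableSet_Ioo]
        refine lintegral_congr fun t => ?_
        by_cases ht : t ∈ Ioo (0 : ℝ) (2 / 3)
        · simp only [hslice, indicator_of_mem ht, lintegral_indicator measurableSet_Ioo]
        · simp only [hslice, indicator_of_notMem ht, lintegral_zero]

theorem setLIntegral_arcDomain_rpow_mul_le (e p : ℝ) {ψ : ℝ → ℝ≥0∞} (hψ : Measurable ψ) :
    ∫⁻ d in arcDomain, ENNReal.ofReal ((d.1 * d.2) ^ e * (d.1 + d.2) ^ (-p)) * ψ (d.1 + d.2) ≤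
      (∫⁻ σ in Ioo (0 : ℝ) 1, ENNReal.ofReal ((σ * (1 - σ)) ^ e)) *
        ∫⁻ t in Ioo (0 : ℝ) (2 / 3), ENNReal.ofReal (t ^ (2 * e + 1 - p)) * ψ t := by
  have hJ := setLIntegral_arcDomain_comp_add_le (J := fun z => ENNReal.ofReal
    ((z.1 * (z.2 - z.1)) ^ e * z.2 ^ (-p)) * ψ z.2) (by fun_prop)
  simp only [add_sub_cancel_left] at hJ
  rw [← lintegral_const_mul _ (by fun_prop)]
  refine hJ.trans_eq (setLIntegral_congr_fun measurableSet_Ioo fun t ht => ?_)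
  have hinner : ∀ a ∈ Ioo 0 t, ENNReal.ofReal ((a * (t - a)) ^ e * t ^ (-p)) * ψ t =
      ENNReal.ofReal ((a * (t - a)) ^ e) * (ENNReal.ofReal (t ^ (-p)) * ψ t) := fun a ha => by
    rw [ENNReal.ofReal_mul (Real.rpow_nonneg (mul_nonneg ha.1.le (sub_nonneg.2 ha.2.le)) _),
      mul_assoc]
  rw [setLIntegral_congr_fun measurableSet_Ioo hinner, lintegral_mul_const _ (by fun_prop),
    lintegral_mul_sub_rpow e ht.1, sub_eq_add_neg (2 * e + 1), Real.rpow_add ht.1 (2 * e + 1),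
    ENNReal.ofReal_mul (Real.rpow_nonneg ht.1.le _)]
  ring

theorem setLIntegral_rpow_neg_mul_comp_le {m : ℝ} (hm : 1 < m) {θ : ℝ} (hθ : 0 < θ) (hθ1 : θ ≤ 1)
    (φ : ℝ → ℝ≥0∞) (b : ℝ) :
    ∫⁻ t in Ioo 0 b, ENNReal.ofReal (t ^ (-m)) * φ (θ * t) ≤
      ∫⁻ w in Ioo 0 (θ * b), ENNReal.ofReal (w ^ (-m)) * φ w := by
  have hweight : ∀ t ∈ Ioo 0 b, ENNReal.ofReal (t ^ (-m)) * φ (θ * t) =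
      ENNReal.ofReal (θ ^ m) * (ENNReal.ofReal ((θ * t) ^ (-m)) * φ (θ * t)) := fun t ht => by
    rw [← mul_assoc, ← ENNReal.ofReal_mul (by positivity), Real.mul_rpow hθ.le ht.1.le,
      ← mul_assoc, ← Real.rpow_add hθ, add_neg_cancel, Real.rpow_zero, one_mul]
  have hconst : θ ^ m * θ⁻¹ ≤ 1 := by
    rw [← Real.rpow_neg_one, ← Real.rpow_add hθ]
    exact Real.rpow_le_one hθ.le hθ1 (by linarith)
  rw [setLIntegral_congr_fun measurableSet_Ioo hweight,
    lintegral_const_mul' _ _ ENNReal.ofReal_ne_top,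
    setLIntegral_Ioo_comp_mul hθ b fun w => ENNReal.ofReal (w ^ (-m)) * φ w,
    ← mul_assoc, ← ENNReal.ofReal_mul (by positivity)]
  exact mul_le_of_le_one_left' (ENNReal.ofReal_le_one.2 hconst)

end BetaIntegral

section ShiftModulus

variable {E : Type*} [NormedAddCommGroup E] {g : ℝ → E} {s q : ℝ}

/-- The `q`-th power of the `L^q` modulus of continuity of a `1`-periodic function. -/
def shiftModulus (q : ℝ) (g : ℝ → E) (t : ℝ) : ℝ≥0∞ :=
  ∫⁻ u in Ico (0 : ℝ) 1, ‖g (u + t) - g u‖ₑ ^ q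

theorem lintegral_enorm_sub_eq_shiftModulus (hper : Function.Periodic g 1) (a b : ℝ) :
    ∫⁻ u in Ico (0 : ℝ) 1, ‖g (u + a) - g (u - b)‖ₑ ^ q = shiftModulus q g (a + b) := by
  have hp : Function.Periodic (fun u => ‖g (u + (a + b)) - g u‖ₑ ^ q) 1 := fun u => by
    simp only [add_right_comm u 1, hper _]
  rw [shiftModulus, ← setLIntegral_Ico_comp_add_of_periodic hp (-b)]
  refine lintegral_congr fun u => ?_
  congr 4
  ring

variable [MeasurableSpace E] [BorelSpace E] [SecondCountableTopology E]

theorem measurable_shiftModulus (hg : Measurable g) : Measurable (shiftModulus q g) :=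
  Measurable.lintegral_prod_right' (f := fun x : ℝ × ℝ => ‖g (x.2 + x.1) - g x.2‖ₑ ^ q)
    (by fun_prop)

theorem shiftModulus_two_mul_le (hq : 1 ≤ q) (hg : Measurable g) (hper : Function.Periodic g 1)
    (t : ℝ) : shiftModulus q g (2 * t) ≤ 2 ^ q * shiftModulus q g t := by
  have hsplit : ∀ u, ‖g (u + t) - g (u - t)‖ₑ ^ q ≤
      2 ^ (q - 1) * (‖g (u + t) - g u‖ₑ ^ q + ‖g (u + 0) - g (u - t)‖ₑ ^ q) := fun u => by
    rw [add_zero, ← sub_add_sub_cancel (g (u + t)) (g u)]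
    exact (ENNReal.rpow_le_rpow (enorm_add_le _ _) (by linarith)).trans
      (ENNReal.rpow_add_le_mul_rpow_add_rpow _ _ hq)
  have hconst : (2 : ℝ≥0∞) ^ (q - 1) ≠ ⊤ :=
    (ENNReal.rpow_lt_top_of_nonneg (by linarith) (by simp)).ne
  have hpow : (2 : ℝ≥0∞) ^ (q - 1) * 2 = 2 ^ q := by
    nth_rewrite 2 [← ENNReal.rpow_one 2]
    rw [← ENNReal.rpow_add _ _ (by simp) (by simp), sub_add_cancel]
  calc shiftModulus q g (2 * t) = ∫⁻ u in Ico (0 : ℝ) 1, ‖g (u + t) - g (u - t)‖ₑ ^ q := by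
        rw [lintegral_enorm_sub_eq_shiftModulus hper, two_mul]
    _ ≤ _ := lintegral_mono hsplit
    _ = 2 ^ q * shiftModulus q g t := by
        rw [lintegral_const_mul' _ _ hconst, lintegral_add_left (by fun_prop),
          lintegral_enorm_sub_eq_shiftModulus hper, zero_add, ← shiftModulus, ← two_mul,
          ← mul_assoc, hpow]

theorem setLIntegral_shiftModulus_le (hq : 0 < q) (hg : Measurable g) :
    ∫⁻ w in Ioo (0 : ℝ) (1 / 2), ENNReal.ofReal (w ^ (-(1 + q * s))) * shiftModulus q g w ≤
      ∫⁻ u in Ico (0 : ℝ) 1, slobodeckiiMarginal s q g u := by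
  unfold slobodeckiiMarginal
  rw [lintegral_lintegral_swap (measurable_slobodeckiiDensity hg).aemeasurable]
  refine le_trans (setLIntegral_mono' measurableSet_Ioo fun w hw => ?_)
    (lintegral_mono_set (s := Ioo (0 : ℝ) (1 / 2)) fun w hw => ⟨by linarith [hw.1], hw.2.le⟩)
  rw [shiftModulus, ← lintegral_const_mul' _ _ ENNReal.ofReal_ne_top]
  refine lintegral_mono fun u => le_of_eq ?_
  rw [slobodeckiiDensity, abs_of_pos hw.1, ← ofReal_norm_rpow hq.le, div_eq_mul_inv,
    ← Real.rpow_neg hw.1.le, mul_comm, ENNReal.ofReal_mul (by positivity)]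

/- Halving the shift before rescaling brings the range `(0, 2/3)` below `1/2`. -/
theorem setLIntegral_shiftModulus_mul_le (hq : 1 ≤ q) (hs : 0 < s) (hg : Measurable g)
    (hper : Function.Periodic g 1) {θ : ℝ} (hθ : 0 < θ) (hθ1 : θ ≤ 1) :
    ∫⁻ t in Ioo (0 : ℝ) (2 / 3), ENNReal.ofReal (t ^ (-(1 + q * s))) * shiftModulus q g (θ * t) ≤
      2 ^ q * ∫⁻ u in Ico (0 : ℝ) 1, slobodeckiiMarginal s q g u := by
  have hexp : 1 < 1 + q * s := by nlinarith
  have hconst : (2 : ℝ≥0∞) ^ q ≠ ⊤ := (ENNReal.rpow_lt_top_of_nonneg (by linarith) (by simp)).ne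
  calc _ ≤ ∫⁻ t in Ioo (0 : ℝ) (2 / 3),
          2 ^ q * (ENNReal.ofReal (t ^ (-(1 + q * s))) * shiftModulus q g (θ / 2 * t)) := by
        refine lintegral_mono fun t => ?_
        rw [show θ * t = 2 * (θ / 2 * t) by ring, mul_left_comm (2 ^ q)]
        gcongr _ * ?_
        exact shiftModulus_two_mul_le hq hg hper _
    _ = 2 ^ q * ∫⁻ t in Ioo (0 : ℝ) (2 / 3),
          ENNReal.ofReal (t ^ (-(1 + q * s))) * shiftModulus q g (θ / 2 * t) :=
        lintegral_const_mul' _ _ hconst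
    _ ≤ 2 ^ q * ∫⁻ w in Ioo (0 : ℝ) (θ / 2 * (2 / 3)),
          ENNReal.ofReal (w ^ (-(1 + q * s))) * shiftModulus q g w := by
        gcongr _ * ?_
        exact setLIntegral_rpow_neg_mul_comp_le hexp (by linarith) (by linarith) _ _
    _ ≤ _ := by
        gcongr _ * ?_
        exact (lintegral_mono_set (Ioo_subset_Ioo_right (by linarith))).trans
          (setLIntegral_shiftModulus_le (by linarith) hg)

end ShiftModulus

section WeightedBend

theorem ae_arcMeasure_mem_arcDomain : ∀ᵐ x ∂arcMeasure, x.2 ∈ arcDomain :=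
  Measure.quasiMeasurePreserving_snd.ae (ae_restrict_mem measurableSet_arcDomain)

variable {V : Type*} [NormedAddCommGroup V] [NormedSpace ℝ V]

/-- The difference quotient over the arc following the base point. -/
def chordRight (f : ℝ → V) (x : ℝ × ℝ × ℝ) : V := x.2.1⁻¹ • (f (x.1 + x.2.1) - f x.1)

/-- The difference quotient over the arc preceding the base point. -/
def chordLeft (f : ℝ → V) (x : ℝ × ℝ × ℝ) : V := x.2.2⁻¹ • (f x.1 - f (x.1 - x.2.2))

/-- The weight that makes `‖weightedBend‖ ^ q`, up to bounded factors, the integrand of the Menger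
energy. -/
def chordWeight (p q : ℝ) (x : ℝ × ℝ × ℝ) : ℝ :=
  (x.2.1 * x.2.2) ^ ((q - p) / q) * (x.2.1 + x.2.2) ^ (-p / q)

/-- The weighted difference of the two chords meeting at the base point: a second difference
quotient of the curve, which lies in `L^q`. -/
def weightedBend (p q : ℝ) (f : ℝ → V) (x : ℝ × ℝ × ℝ) : V :=
  chordWeight p q x • (chordRight f x - chordLeft f x)

theorem chordWeight_nonneg {p q : ℝ} {x : ℝ × ℝ × ℝ} (ha : 0 < x.2.1) (hb : 0 < x.2.2) :
    0 ≤ chordWeight p q x := by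
  unfold chordWeight
  positivity

theorem chordWeight_rpow {p q : ℝ} (hq : 0 < q) {x : ℝ × ℝ × ℝ} (ha : 0 < x.2.1)
    (hb : 0 < x.2.2) :
    chordWeight p q x ^ q = (x.2.1 * x.2.2) ^ (q - p) * (x.2.1 + x.2.2) ^ (-p) := by
  rw [chordWeight, Real.mul_rpow (by positivity) (by positivity), ← Real.rpow_mul (by positivity),
    ← Real.rpow_mul (by positivity), div_mul_cancel₀ _ hq.ne', div_mul_cancel₀ _ hq.ne']

variable {n : ℕ} {s p q : ℝ} {f f' : ℝ → EuclideanSpace ℝ (Fin n)}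

theorem InW.enorm_chordRight_sub_chordLeft_rpow_le (hq : 1 < q) (hs : 0 ≤ s) (h : InW s q f f')
    {u a b : ℝ} (ha : a ≠ 0) (hb : b ≠ 0) :
    ‖chordRight f (u, a, b) - chordLeft f (u, a, b)‖ₑ ^ q ≤
      ∫⁻ θ in Ioc (0 : ℝ) 1, ‖f' (u + a * θ) - f' (u - b * θ)‖ₑ ^ q := by
  have hright : IntervalIntegrable (fun θ => f' (u + a * θ)) volume 0 1 := by
    have := ((h.intervalIntegrable hq hs u (u + a)).comp_add_left u).comp_mul_left (c := a)
    simpa [ha] using this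
  have hleft : IntervalIntegrable (fun θ => f' (u - b * θ)) volume 0 1 := by
    have := ((h.intervalIntegrable hq hs u (u - b)).comp_sub_left u).comp_mul_left (c := b)
    simpa [hb] using this
  have hchordRight : chordRight f (u, a, b) = ∫ θ in (0 : ℝ)..1, f' (u + a * θ) := by
    rw [intervalIntegral.integral_comp_add_mul _ ha, chordRight, h.sub_eq_integral hq hs]
    simp
  have hchordLeft : chordLeft f (u, a, b) = ∫ θ in (0 : ℝ)..1, f' (u - b * θ) := by
    rw [intervalIntegral.integral_comp_sub_mul _ hb, chordLeft, h.sub_eq_integral hq hs]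
    simp
  have : IsProbabilityMeasure (volume.restrict (Ioc (0 : ℝ) 1)) := ⟨by simp⟩
  have hmeas := h.1.meas'
  rw [hchordRight, hchordLeft, ← intervalIntegral.integral_sub hright hleft,
    intervalIntegral.integral_of_le zero_le_one]
  exact enorm_integral_rpow_le_lintegral_rpow hq (by fun_prop)

theorem InW.enorm_weightedBend_rpow_le (hq : 1 < q) (hs : 0 ≤ s) (h : InW s q f f')
    {x : ℝ × ℝ × ℝ} (hx : x.2 ∈ arcDomain) :
    ‖weightedBend p q f x‖ₑ ^ q ≤
      ENNReal.ofReal ((x.2.1 * x.2.2) ^ (q - p) * (x.2.1 + x.2.2) ^ (-p)) *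
        ∫⁻ θ in Ioc (0 : ℝ) 1, ‖f' (x.1 + x.2.1 * θ) - f' (x.1 - x.2.2 * θ)‖ₑ ^ q := by
  have hq0 : 0 < q := by linarith
  have hw := chordWeight_nonneg (p := p) (q := q) hx.1 hx.2.1
  rw [weightedBend, enorm_smul, ENNReal.mul_rpow_of_nonneg _ _ hq0.le,
    ← chordWeight_rpow hq0 hx.1 hx.2.1, Real.enorm_of_nonneg hw,
    ENNReal.ofReal_rpow_of_nonneg hw hq0.le]
  gcongr
  exact h.enorm_chordRight_sub_chordLeft_rpow_le hq hs hx.1.ne' hx.2.1.ne'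

theorem InW.lintegral_enorm_weightedBend_rpow_le (hq : 1 < q) (hs : 0 ≤ s) (h : InW s q f f') :
    ∫⁻ x, ‖weightedBend p q f x‖ₑ ^ q ∂arcMeasure ≤
      ∫⁻ d in arcDomain, ENNReal.ofReal ((d.1 * d.2) ^ (q - p) * (d.1 + d.2) ^ (-p)) *
        ∫⁻ θ in Ioc (0 : ℝ) 1, shiftModulus q f' (θ * (d.1 + d.2)) := by
  have hmeas := h.1.meas'
  have hinner : Measurable fun x : ℝ × ℝ × ℝ => ∫⁻ θ in Ioc (0 : ℝ) 1,
      ‖f' (x.1 + x.2.1 * θ) - f' (x.1 - x.2.2 * θ)‖ₑ ^ q :=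
    Measurable.lintegral_prod_right' (f := fun x : (ℝ × ℝ × ℝ) × ℝ =>
      ‖f' (x.1.1 + x.1.2.1 * x.2) - f' (x.1.1 - x.1.2.2 * x.2)‖ₑ ^ q) (by fun_prop)
  have hprod : Measurable fun x : ℝ × ℝ × ℝ =>
      ENNReal.ofReal ((x.2.1 * x.2.2) ^ (q - p) * (x.2.1 + x.2.2) ^ (-p)) *
        ∫⁻ θ in Ioc (0 : ℝ) 1, ‖f' (x.1 + x.2.1 * θ) - f' (x.1 - x.2.2 * θ)‖ₑ ^ q :=
    Measurable.mul (by fun_prop) hinner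
  refine (lintegral_mono_ae (ae_arcMeasure_mem_arcDomain.mono fun x hx =>
    h.enorm_weightedBend_rpow_le hq hs hx)).trans_eq ?_
  rw [arcMeasure, lintegral_prod_symm _ hprod.aemeasurable]
  refine lintegral_congr fun d => ?_
  have hswap : Measurable fun x : ℝ × ℝ => ‖f' (x.1 + d.1 * x.2) - f' (x.1 - d.2 * x.2)‖ₑ ^ q := by
    fun_prop
  dsimp only
  rw [lintegral_const_mul' _ _ ENNReal.ofReal_ne_top, lintegral_lintegral_swap hswap.aemeasurable]
  simp only [lintegral_enorm_sub_eq_shiftModulus h.1.periodic', mul_comm _ (d.1 + d.2), add_mul]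

theorem exists_lintegral_enorm_weightedBend_rpow_le (n : ℕ) (hq : 1 < q)
    (hp₁ : 2 / 3 * q + 1 < p) (hp₂ : p < q + 2 / 3) :
    ∃ C : ℝ≥0∞, C ≠ ⊤ ∧ ∀ f f' : ℝ → EuclideanSpace ℝ (Fin n),
      InW ((3 * p - 2 * q - 2) / q) q f f' →
        ∫⁻ x, ‖weightedBend p q f x‖ₑ ^ q ∂arcMeasure ≤
          C * sobSemiPow ((3 * p - 2 * q - 2) / q) q f' := by
  have hq0 : 0 < q := by linarith
  set s := (3 * p - 2 * q - 2) / q with hs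
  have hqs : 2 * (q - p) + 1 - p = -(1 + q * s) := by rw [hs]; field_simp; ring
  have hs0 : 0 < s := div_pos (by linarith) hq0
  set B := ∫⁻ σ in Ioo (0 : ℝ) 1, ENNReal.ofReal ((σ * (1 - σ)) ^ (q - p))
  refine ⟨B * 2 ^ q, ENNReal.mul_ne_top (lintegral_mul_one_sub_rpow_lt_top (by linarith)).ne
    (ENNReal.rpow_lt_top_of_nonneg hq0.le (by simp)).ne, fun f f' h => ?_⟩
  have hφ := measurable_shiftModulus (q := q) h.1.meas'
  have hψ : Measurable fun t => ∫⁻ θ in Ioc (0 : ℝ) 1, shiftModulus q f' (θ * t) :=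
    Measurable.lintegral_prod_right' (f := fun x : ℝ × ℝ => shiftModulus q f' (x.2 * x.1))
      (by fun_prop)
  have hswap : Measurable fun x : ℝ × ℝ =>
      ENNReal.ofReal (x.2 ^ (-(1 + q * s))) * shiftModulus q f' (x.1 * x.2) := by fun_prop
  calc ∫⁻ x, ‖weightedBend p q f x‖ₑ ^ q ∂arcMeasure
      ≤ B * ∫⁻ t in Ioo (0 : ℝ) (2 / 3), ENNReal.ofReal (t ^ (2 * (q - p) + 1 - p)) *
          ∫⁻ θ in Ioc (0 : ℝ) 1, shiftModulus q f' (θ * t) :=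
        (h.lintegral_enorm_weightedBend_rpow_le hq hs0.le).trans
          (setLIntegral_arcDomain_rpow_mul_le _ _ hψ)
    _ = B * ∫⁻ θ in Ioc (0 : ℝ) 1, ∫⁻ t in Ioo (0 : ℝ) (2 / 3),
          ENNReal.ofReal (t ^ (-(1 + q * s))) * shiftModulus q f' (θ * t) := by
        rw [lintegral_lintegral_swap hswap.aemeasurable, hqs]
        simp only [lintegral_const_mul' _ _ ENNReal.ofReal_ne_top]
    _ ≤ B * ∫⁻ θ in Ioc (0 : ℝ) 1, 2 ^ q * sobSemiPow s q f' := by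
        gcongr B * ?_
        exact setLIntegral_mono' measurableSet_Ioc fun θ hθ =>
          setLIntegral_shiftModulus_mul_le hq.le hs0 h.1.meas' h.1.periodic' hθ.1 hθ.2
    _ = _ := by
        rw [setLIntegral_const]
        simp [mul_assoc]

end WeightedBend

section Frame

variable {V : Type*} [NormedAddCommGroup V] [NormedSpace ℝ V]

/-- The difference quotient over both arcs adjacent to the base point. -/
def chordOuter (f : ℝ → V) (x : ℝ × ℝ × ℝ) : V :=
  (x.2.1 + x.2.2)⁻¹ • (f (x.1 + x.2.1) - f (x.1 - x.2.2))

/-- The velocities at the three points of a configuration, followed by the difference quotients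
along its three chords. -/
def frameVector (f f' : ℝ → V) (x : ℝ × ℝ × ℝ) : Fin 6 → V :=
  ![f' x.1, f' (x.1 + x.2.1), f' (x.1 - x.2.2), chordRight f x, chordLeft f x, chordOuter f x]

theorem frameVector_linearCombination (a b : ℝ) (f f' h h' : ℝ → V) :
    frameVector (a • f + b • h) (a • f' + b • h') =
      a • frameVector f f' + b • frameVector h h' := by
  funext x i
  fin_cases i <;> simp [frameVector, chordRight, chordLeft, chordOuter] <;> module

theorem frameVector_sub (f f' h h' : ℝ → V) :
    frameVector (f - h) (f' - h') = frameVector f f' - frameVector h h' := by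
  simpa [sub_eq_add_neg] using frameVector_linearCombination 1 (-1) f f' h h'

theorem weightedBend_linearCombination (p q a b : ℝ) (f h : ℝ → V) :
    weightedBend p q (a • f + b • h) = a • weightedBend p q f + b • weightedBend p q h := by
  funext x
  simp only [weightedBend, chordRight, chordLeft, Pi.add_apply, Pi.smul_apply]
  module

theorem weightedBend_sub (p q : ℝ) (f h : ℝ → V) :
    weightedBend p q (f - h) = weightedBend p q f - weightedBend p q h := by
  simpa [sub_eq_add_neg] using weightedBend_linearCombination p q 1 (-1) f h

variable [MeasurableSpace V] [BorelSpace V] [SecondCountableTopology V] {f f' : ℝ → V}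

theorem measurable_frameVector (hf : Measurable f) (hf' : Measurable f') :
    Measurable (frameVector f f') := by
  have hright : Measurable (chordRight f) := by unfold chordRight; fun_prop
  have hleft : Measurable (chordLeft f) := by unfold chordLeft; fun_prop
  have houter : Measurable (chordOuter f) := by unfold chordOuter; fun_prop
  refine measurable_pi_lambda _ fun i => ?_
  fin_cases i
  exacts [hf'.comp measurable_fst, hf'.comp (measurable_fst.add measurable_snd.fst),
    hf'.comp (measurable_fst.sub measurable_snd.snd), hright, hleft, houter]

theorem measurable_weightedBend (p q : ℝ) (hf : Measurable f) :
    Measurable (weightedBend p q f) := by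
  unfold weightedBend chordWeight chordRight chordLeft
  fun_prop

end Frame

section FrameBounds

theorem quasiMeasurePreserving_add_comp_snd {φ : ℝ × ℝ → ℝ} (hφ : Measurable φ) :
    Measure.QuasiMeasurePreserving (fun x : ℝ × ℝ × ℝ => x.1 + φ x.2) arcMeasure volume := by
  have hm : Measurable fun x : ℝ × ℝ × ℝ => x.1 + φ x.2 := by fun_prop
  refine ⟨hm, Measure.AbsolutelyContinuous.mk fun t ht ht0 => ?_⟩
  rw [Measure.map_apply hm ht, arcMeasure, Measure.prod_apply_symm (hm ht)]
  refine (lintegral_congr fun d => ?_).trans lintegral_zero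
  refine nonpos_iff_eq_zero.1 ((Measure.restrict_apply_le _ _).trans_eq ?_)
  exact (measure_preimage_add_right volume (φ d) t).trans ht0

theorem ae_arcMeasure_of_ae {P : ℝ → Prop} (hP : ∀ᵐ t, P t) :
    ∀ᵐ x ∂arcMeasure, P x.1 ∧ P (x.1 + x.2.1) ∧ P (x.1 - x.2.2) := by
  have hmiddle := (quasiMeasurePreserving_add_comp_snd (φ := fun _ => 0) measurable_const).ae hP
  have hright := (quasiMeasurePreserving_add_comp_snd measurable_fst).ae hP
  have hleft := (quasiMeasurePreserving_add_comp_snd measurable_snd.neg).ae hP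
  filter_upwards [hmiddle, hright, hleft] with x hm hr hl
  exact ⟨by simpa using hm, hr, by simpa [sub_eq_add_neg] using hl⟩

theorem frameVector_induction {V : Type*} [NormedAddCommGroup V] [NormedSpace ℝ V] {f f' : ℝ → V}
    {P : V → Prop} {x : ℝ × ℝ × ℝ} (hx : x.2 ∈ arcDomain)
    (hder : P (f' x.1) ∧ P (f' (x.1 + x.2.1)) ∧ P (f' (x.1 - x.2.2)))
    (hchord : ∀ u t, 0 < t → t ≤ 2 / 3 → P (t⁻¹ • (f (u + t) - f u))) (i : Fin 6) :
    P (frameVector f f' x i) := by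
  obtain ⟨ha, hb, hab, hba⟩ := hx
  fin_cases i
  · exact hder.1
  · exact hder.2.1
  · exact hder.2.2
  · exact hchord x.1 x.2.1 ha (by linarith)
  · have hleft := hchord (x.1 - x.2.2) x.2.2 hb (by linarith)
    rwa [sub_add_cancel] at hleft
  · have houter := hchord (x.1 - x.2.2) (x.2.1 + x.2.2) (add_pos ha hb) (by linarith)
    rwa [show x.1 - x.2.2 + (x.2.1 + x.2.2) = x.1 + x.2.1 by ring] at houter

variable {n : ℕ} {s p q c M : ℝ} {f f' : ℝ → EuclideanSpace ℝ (Fin n)}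

theorem InW.ae_norm_frameVector_le (hq : 1 < q) (hs : 0 ≤ s) (h : InW s q f f')
    (hM : ∀ᵐ x : ℝ, ‖f' x‖ ≤ M) : ∀ᵐ x ∂arcMeasure, ∀ i, ‖frameVector f f' x i‖ ≤ M := by
  filter_upwards [ae_arcMeasure_mem_arcDomain, ae_arcMeasure_of_ae hM] with x hx hd
  refine frameVector_induction (P := (‖·‖ ≤ M)) hx hd fun u t ht _ => ?_
  have hLip := h.norm_sub_le_of_ae_bound hq hs hM u (u + t)
  rw [add_sub_cancel_left, abs_of_pos ht] at hLip
  rwa [norm_smul, norm_inv, Real.norm_of_nonneg ht.le, inv_mul_le_iff₀' ht]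

theorem ChordLowerBound.ae_le_norm_frameVector (hf : ChordLowerBound c f)
    (hder : ∀ᵐ x : ℝ, HasDerivAt f (f' x) x) :
    ∀ᵐ x ∂arcMeasure, ∀ i, c ≤ ‖frameVector f f' x i‖ := by
  filter_upwards [ae_arcMeasure_mem_arcDomain, ae_arcMeasure_of_ae (hf.ae_le_norm_deriv hder)]
    with x hx hd
  refine frameVector_induction (P := (c ≤ ‖·‖)) hx hd fun u t ht ht' => ?_
  rw [norm_smul, norm_inv, Real.norm_of_nonneg ht.le, le_inv_mul_iff₀' ht]
  exact hf u t ht.le ht'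

theorem InU.exists_isCompact_frameVector_mem (hq : 1 < q) (hs : 1 / q < s) (hf : InU s q f f') :
    ∃ K : Set (Fin 6 → EuclideanSpace ℝ (Fin n)), IsCompact K ∧ K ⊆ {ξ | ∀ i, ξ i ≠ 0} ∧
      ∀ᵐ x ∂arcMeasure, frameVector f f' x ∈ K := by
  have hs0 : 0 ≤ s := le_trans (by positivity) hs.le
  obtain ⟨c, hc, hchord⟩ := hf.exists_chordLowerBound hq hs
  obtain ⟨C, -, hC⟩ := exists_ae_norm_deriv_le_sobNorm n hq hs
  refine ⟨normShell _ _ c (C * sobNorm s q f f'), isCompact_normShell _ _,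
    normShell_subset_ne_zero hc _, ?_⟩
  filter_upwards [hchord.ae_le_norm_frameVector (hf.1.ae_hasDerivAt hq hs0),
    hf.1.ae_norm_frameVector_le hq hs0 (hC f f' hf.1)] with x hlower hupper i
  exact ⟨hlower i, hupper i⟩

theorem exists_lpNorm_frameVector_le (n : ℕ) (hq : 1 < q) (hs : 1 / q < s) :
    ∃ C : ℝ, 0 ≤ C ∧ ∀ f f' : ℝ → EuclideanSpace ℝ (Fin n), InW s q f f' →
      MemLp (frameVector f f') ∞ arcMeasure ∧
        lpNorm (frameVector f f') ∞ arcMeasure ≤ C * sobNorm s q f f' := by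
  have hs0 : 0 ≤ s := le_trans (by positivity) hs.le
  obtain ⟨C, hC, hder⟩ := exists_ae_norm_deriv_le_sobNorm n hq hs
  refine ⟨C, hC, fun f f' hf => ?_⟩
  have hN : 0 ≤ C * sobNorm s q f f' := mul_nonneg hC (sobNorm_nonneg s q f f')
  have hbound : ∀ᵐ x ∂arcMeasure, ‖frameVector f f' x‖ ≤ C * sobNorm s q f f' :=
    (hf.ae_norm_frameVector_le hq hs0 (hder f f' hf)).mono fun _ hx =>
      (pi_norm_le_iff_of_nonneg hN).2 hx
  have hmeas := (measurable_frameVector (hf.continuous hq hs0).measurable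
    hf.1.meas').aestronglyMeasurable (μ := arcMeasure)
  refine ⟨memLp_top_of_bound hmeas _ hbound, ?_⟩
  rw [← toReal_eLpNorm hmeas, eLpNorm_exponent_top]
  exact ENNReal.toReal_le_of_le_ofReal hN (eLpNormEssSup_le_of_ae_bound hbound)

theorem exists_lpNorm_weightedBend_le (n : ℕ) (hq : 1 < q) (hp₁ : 2 / 3 * q + 1 < p)
    (hp₂ : p < q + 2 / 3) :
    ∃ C : ℝ, 0 ≤ C ∧ ∀ f f' : ℝ → EuclideanSpace ℝ (Fin n), InW ((3 * p - 2 * q - 2) / q) q f f' →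
      MemLp (weightedBend p q f) (ENNReal.ofReal q) arcMeasure ∧
        lpNorm (weightedBend p q f) (ENNReal.ofReal q) arcMeasure ≤
          C * sobNorm ((3 * p - 2 * q - 2) / q) q f f' := by
  have hq0 : 0 < q := by linarith
  have hs0 : 0 ≤ (3 * p - 2 * q - 2) / q := div_nonneg (by linarith) hq0.le
  set s := (3 * p - 2 * q - 2) / q
  have hqne : ENNReal.ofReal q ≠ 0 := by simpa using hq0
  obtain ⟨C, hC, hbend⟩ := exists_lintegral_enorm_weightedBend_rpow_le n hq hp₁ hp₂
  refine ⟨C.toReal ^ (1 / q), by positivity, fun f f' hf => ?_⟩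
  have hmeas := (measurable_weightedBend p q
    (hf.continuous hq hs0).measurable).aestronglyMeasurable (μ := arcMeasure)
  have hle : eLpNorm (weightedBend p q f) (ENNReal.ofReal q) arcMeasure ≤
      (C * sobSemiPow s q f') ^ (1 / q) := by
    rw [eLpNorm_eq_lintegral_rpow_enorm_toReal hqne ENNReal.ofReal_ne_top,
      ENNReal.toReal_ofReal hq0.le]
    gcongr
    exact hbend f f' hf
  have htop : (C * sobSemiPow s q f') ^ (1 / q) < ⊤ :=
    ENNReal.rpow_lt_top_of_nonneg (by positivity) (ENNReal.mul_ne_top hC hf.2.ne)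
  refine ⟨⟨hmeas, hle.trans_lt htop⟩, ?_⟩
  calc lpNorm (weightedBend p q f) (ENNReal.ofReal q) arcMeasure
      ≤ ((C * sobSemiPow s q f') ^ (1 / q)).toReal := by
        rw [← toReal_eLpNorm hmeas]
        exact ENNReal.toReal_mono htop.ne hle
    _ = C.toReal ^ (1 / q) * sobSeminorm s q f' := by
        rw [← ENNReal.toReal_rpow, ENNReal.toReal_mul,
          Real.mul_rpow ENNReal.toReal_nonneg ENNReal.toReal_nonneg, sobSeminorm]
    _ ≤ C.toReal ^ (1 / q) * sobNorm s q f f' := by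
        gcongr
        exact sobSeminorm_le_sobNorm s q f f'

theorem exists_lpNorm_frameVector_add_lpNorm_weightedBend_le (n : ℕ) (hq : 1 < q)
    (hp₁ : 2 / 3 * q + 1 < p) (hp₂ : p < q + 2 / 3) :
    ∃ C : ℝ, 0 ≤ C ∧ ∀ f f' : ℝ → EuclideanSpace ℝ (Fin n), InW ((3 * p - 2 * q - 2) / q) q f f' →
      MemLp (frameVector f f') ∞ arcMeasure ∧
      MemLp (weightedBend p q f) (ENNReal.ofReal q) arcMeasure ∧
      lpNorm (frameVector f f') ∞ arcMeasure +
        lpNorm (weightedBend p q f) (ENNReal.ofReal q) arcMeasure ≤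
          C * sobNorm ((3 * p - 2 * q - 2) / q) q f f' := by
  have hs : 1 / q < (3 * p - 2 * q - 2) / q := by
    gcongr
    linarith
  obtain ⟨C₁, hC₁, hframe⟩ := exists_lpNorm_frameVector_le n hq hs
  obtain ⟨C₂, hC₂, hbend⟩ := exists_lpNorm_weightedBend_le n hq hp₁ hp₂
  refine ⟨C₁ + C₂, add_nonneg hC₁ hC₂, fun f f' hf => ?_⟩
  obtain ⟨hframeL, hframe_le⟩ := hframe f f' hf
  obtain ⟨hbendL, hbend_le⟩ := hbend f f' hf
  exact ⟨hframeL, hbendL, (add_le_add hframe_le hbend_le).trans_eq (add_mul _ _ _).symm⟩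

end FrameBounds

section EnergyFormula

variable {n : ℕ} {p q : ℝ} {f f' : ℝ → EuclideanSpace ℝ (Fin n)}

theorem wedgeNorm_nonneg (a b : EuclideanSpace ℝ (Fin n)) : 0 ≤ wedgeNorm a b :=
  Real.sqrt_nonneg _

theorem wedgeNorm_comm (a b : EuclideanSpace ℝ (Fin n)) : wedgeNorm a b = wedgeNorm b a := by
  rw [wedgeNorm, wedgeNorm, real_inner_comm, mul_comm]

theorem wedgeNorm_neg_sub (a b : EuclideanSpace ℝ (Fin n)) :
    wedgeNorm (-a) (b - a) = wedgeNorm a b := by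
  rw [wedgeNorm, wedgeNorm, norm_neg, norm_sub_sq_real, inner_neg_left, inner_sub_right,
    real_inner_self_eq_norm_sq, real_inner_comm]
  congr 1
  ring

theorem wedgeNorm_sub_right (a b : EuclideanSpace ℝ (Fin n)) :
    wedgeNorm a (a - b) = wedgeNorm a b := by
  rw [wedgeNorm, wedgeNorm, norm_sub_sq_real, inner_sub_right, real_inner_self_eq_norm_sq]
  congr 1
  ring

theorem wedgeNorm_smul_smul (α β : ℝ) (a b : EuclideanSpace ℝ (Fin n)) :
    wedgeNorm (α • a) (β • b) = |α * β| * wedgeNorm a b := by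
  rw [wedgeNorm, wedgeNorm, ← Real.sqrt_sq (abs_nonneg (α * β)),
    ← Real.sqrt_mul (sq_nonneg _), sq_abs, norm_smul, norm_smul, inner_smul_left, inner_smul_right,
    mul_pow, mul_pow, Real.norm_eq_abs, Real.norm_eq_abs, sq_abs, sq_abs]
  congr 1
  simp only [conj_trivial]
  ring

theorem invR_swap_left (p q : ℝ) (x y z : EuclideanSpace ℝ (Fin n)) :
    invR p q x y z = invR p q y x z := by
  have hwedge := wedgeNorm_neg_sub (y - x) (z - x)
  rw [neg_sub, sub_sub_sub_cancel_right] at hwedge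
  rw [invR, invR, hwedge, norm_sub_rev x z, norm_sub_rev x y, norm_sub_rev y z]
  congr 2
  ring

theorem invR_swap_right (p q : ℝ) (x y z : EuclideanSpace ℝ (Fin n)) :
    invR p q x y z = invR p q x z y := by
  rw [invR, invR, wedgeNorm_comm, norm_sub_rev y z]
  congr 2
  ring

theorem norm_scaledRejection_weightedBend (p q : ℝ) (f : ℝ → EuclideanSpace ℝ (Fin n))
    {x : ℝ × ℝ × ℝ} (ha : 0 < x.2.1) (hb : 0 < x.2.2) :
    ‖scaledRejection (chordRight f x) (weightedBend p q f x)‖ =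
      chordWeight p q x * wedgeNorm (chordRight f x) (chordLeft f x) := by
  have hwedge := wedgeNorm_smul_smul 1 (chordWeight p q x) (chordRight f x)
    (chordRight f x - chordLeft f x)
  rw [one_smul, one_mul, abs_of_nonneg (chordWeight_nonneg ha hb), wedgeNorm_sub_right] at hwedge
  exact (norm_scaledRejection _ _).trans hwedge

theorem invR_eq_chord (p q : ℝ) (f : ℝ → EuclideanSpace ℝ (Fin n)) {x : ℝ × ℝ × ℝ}
    (ha : 0 < x.2.1) (hb : 0 < x.2.2) :
    invR p q (f x.1) (f (x.1 + x.2.1)) (f (x.1 - x.2.2)) =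
      (x.2.1 * x.2.2) ^ (q - p) * (x.2.1 + x.2.2) ^ (-p) *
        wedgeNorm (chordRight f x) (chordLeft f x) ^ q /
          (‖chordRight f x‖ * ‖chordLeft f x‖ * ‖chordOuter f x‖) ^ p := by
  have hab : 0 < x.2.1 * x.2.2 := mul_pos ha hb
  have hsum : 0 < x.2.1 + x.2.2 := add_pos ha hb
  have hright : f (x.1 + x.2.1) - f x.1 = x.2.1 • chordRight f x := by
    rw [chordRight, smul_inv_smul₀ ha.ne']
  have hleft : f (x.1 - x.2.2) - f x.1 = (-x.2.2) • chordLeft f x := by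
    rw [chordLeft, neg_smul, smul_inv_smul₀ hb.ne', neg_sub]
  have houter : f (x.1 + x.2.1) - f (x.1 - x.2.2) = (x.2.1 + x.2.2) • chordOuter f x := by
    rw [chordOuter, smul_inv_smul₀ hsum.ne']
  have hprod : (x.2.1 + x.2.2) * ‖chordOuter f x‖ * (x.2.1 * ‖chordRight f x‖) *
      (x.2.2 * ‖chordLeft f x‖) = (x.2.1 * x.2.2) * (x.2.1 + x.2.2) *
        (‖chordRight f x‖ * ‖chordLeft f x‖ * ‖chordOuter f x‖) := by ring
  rw [invR, hright, hleft, houter, wedgeNorm_smul_smul, norm_smul, norm_smul, norm_smul, mul_neg,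
    abs_neg, abs_of_pos hab, norm_neg, Real.norm_of_nonneg ha.le, Real.norm_of_nonneg hb.le,
    Real.norm_of_nonneg hsum.le, hprod, Real.mul_rpow hab.le (wedgeNorm_nonneg _ _),
    Real.mul_rpow (mul_pos hab hsum).le (by positivity), Real.mul_rpow hab.le hsum.le,
    Real.rpow_sub hab, Real.rpow_neg hsum.le]
  field_simp

theorem mengerDensity_frameVector (p : ℝ) (hq : 0 < q) (f f' : ℝ → EuclideanSpace ℝ (Fin n))
    {x : ℝ × ℝ × ℝ} (ha : 0 < x.2.1) (hb : 0 < x.2.2) :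
    mengerDensity p q (frameVector f f' x, weightedBend p q f x) =
      ‖f' x.1‖ * ‖f' (x.1 + x.2.1)‖ * ‖f' (x.1 - x.2.2)‖ *
        invR p q (f x.1) (f (x.1 + x.2.1)) (f (x.1 - x.2.2)) := by
  change ‖f' x.1‖ * ‖f' (x.1 + x.2.1)‖ * ‖f' (x.1 - x.2.2)‖ *
    ‖scaledRejection (chordRight f x) (weightedBend p q f x)‖ ^ q /
      (‖chordRight f x‖ * ‖chordLeft f x‖ * ‖chordOuter f x‖) ^ p = _
  rw [norm_scaledRejection_weightedBend p q f ha hb, invR_eq_chord p q f ha hb,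
    Real.mul_rpow (chordWeight_nonneg ha hb) (wedgeNorm_nonneg _ _), chordWeight_rpow hq ha hb]
  ring

theorem symmetricPeriodic_mengerIntegrand (p q : ℝ) (hper : Function.Periodic f 1)
    (hper' : Function.Periodic f' 1) :
    SymmetricPeriodic fun u v w =>
      ENNReal.ofReal (‖f' u‖ * ‖f' v‖ * ‖f' w‖ * invR p q (f u) (f v) (f w)) where
  periodic u v w := by simp only [hper w, hper' w]
  swap_left u v w := by rw [invR_swap_left, mul_comm ‖f' u‖]
  swap_right u v w := by rw [invR_swap_right, mul_right_comm ‖f' u‖]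

theorem measurable_mengerDensity_frameVector (p q : ℝ) (hf : Measurable f) (hf' : Measurable f') :
    Measurable fun x => mengerDensity p q (frameVector f f' x, weightedBend p q f x) := by
  have hframe := fun i => measurable_pi_iff.1 (measurable_frameVector hf hf') i
  have hbend := measurable_weightedBend p q hf
  simp only [mengerDensity, scaledRejection]
  fun_prop

theorem toReal_menger_eq (p : ℝ) (hq : 0 < q) (hf : Measurable f) (hf' : Measurable f')
    (hper : Function.Periodic f 1) (hper' : Function.Periodic f' 1) :
    (menger p q f f').toReal =
      6 * ∫ x, mengerDensity p q (frameVector f f' x, weightedBend p q f x) ∂arcMeasure := by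
  have hF : Measurable fun x : ℝ × ℝ × ℝ => ENNReal.ofReal
      (‖f' x.1‖ * ‖f' x.2.1‖ * ‖f' x.2.2‖ * invR p q (f x.1) (f x.2.1) (f x.2.2)) := by
    simp only [invR, wedgeNorm]
    fun_prop
  rw [menger, (symmetricPeriodic_mengerIntegrand p q hper hper').lintegral_eq_arcMeasure hF,
    ENNReal.toReal_mul, integral_eq_lintegral_of_nonneg_ae
      (ae_of_all _ fun x => mengerDensity_nonneg _ _ _)
      (measurable_mengerDensity_frameVector p q hf hf').aestronglyMeasurable]
  congr 2
  refine lintegral_congr_ae ?_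
  filter_upwards [ae_arcMeasure_mem_arcDomain] with x hx
  rw [mengerDensity_frameVector p hq f f' hx.1 hx.2.1]

end EnergyFormula

section Differential

variable {n : ℕ} {p q : ℝ} {γ γ' h h' : ℝ → EuclideanSpace ℝ (Fin n)}

/-- The Gâteaux derivative of the Menger energy at `γ` in the direction `h`: the first variation of
the integral of `mengerDensity` along the linear map `γ ↦ (frameVector, weightedBend)`. The factor
`6` is the number of orderings of three points. -/
def mengerDifferential (p q : ℝ) (γ γ' h h' : ℝ → EuclideanSpace ℝ (Fin n)) : ℝ :=
  6 * firstVariation (mengerDensity p q) arcMeasure (frameVector γ γ') (weightedBend p q γ)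
    (frameVector h h') (weightedBend p q h)

theorem one_div_lt_exponent (hq : 0 < q) (hp₁ : 2 / 3 * q + 1 < p) :
    1 / q < (3 * p - 2 * q - 2) / q := by
  gcongr
  linarith

theorem toReal_menger_add_smul (p : ℝ) {s : ℝ} (hq : 1 < q) (hs : 0 ≤ s) (hγ : InW s q γ γ')
    (hh : InW s q h h') (τ : ℝ) :
    (menger p q (γ + τ • h) (γ' + τ • h')).toReal =
      6 * ∫ x, mengerDensity p q (frameVector γ γ' x + τ • frameVector h h' x,
        weightedBend p q γ x + τ • weightedBend p q h x) ∂arcMeasure := by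
  have hframe := frameVector_linearCombination 1 τ γ γ' h h'
  have hbend := weightedBend_linearCombination p q 1 τ γ h
  simp only [one_smul] at hframe hbend
  rw [toReal_menger_eq p (by linarith)
    ((hγ.continuous hq hs).measurable.add ((hh.continuous hq hs).measurable.const_smul τ))
    (hγ.1.meas'.add (hh.1.meas'.const_smul τ))
    (hγ.1.periodic.add (hh.1.periodic.smul τ)) (hγ.1.periodic'.add (hh.1.periodic'.smul τ)),
    hframe, hbend]
  rfl

theorem tendsto_menger_slope (hq : 1 < q) (hp₁ : 2 / 3 * q + 1 < p) (hp₂ : p < q + 2 / 3)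
    (hγ : InU ((3 * p - 2 * q - 2) / q) q γ γ') (hh : InW ((3 * p - 2 * q - 2) / q) q h h') :
    Tendsto (fun τ : ℝ =>
        ((menger p q (γ + τ • h) (γ' + τ • h')).toReal - (menger p q γ γ').toReal) / τ)
      (𝓝[≠] (0 : ℝ)) (𝓝 (mengerDifferential p q γ γ' h h')) := by
  have hs := one_div_lt_exponent (by linarith) hp₁
  have hs0 : 0 ≤ (3 * p - 2 * q - 2) / q := le_trans (by positivity) hs.le
  obtain ⟨K, hK, hKΩ, hmem⟩ := hγ.exists_isCompact_frameVector_mem hq hs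
  obtain ⟨_, -, hLp⟩ := exists_lpNorm_frameVector_add_lpNorm_weightedBend_le n hq hp₁ hp₂
  obtain ⟨hframeγ, hbendγ, -⟩ := hLp γ γ' hγ.1
  obtain ⟨hframe, hbend, -⟩ := hLp h h' hh
  have hderiv := ((homogeneousIntegrand_mengerDensity p hq).hasDerivAt_integral hq hK hKΩ
    hframeγ.1 hmem hbendγ hframe hbend).const_mul 6
  refine hderiv.tendsto_slope_zero.congr fun τ => ?_
  have hzero := toReal_menger_add_smul p hq hs0 hγ.1 hh 0
  simp only [zero_smul, add_zero] at hzero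
  rw [toReal_menger_add_smul p hq hs0 hγ.1 hh, hzero, zero_add, smul_eq_mul, inv_mul_eq_div]
  simp only [zero_smul, add_zero]

theorem mengerDifferential_linearCombination (hq : 1 < q) (hp₁ : 2 / 3 * q + 1 < p)
    (hp₂ : p < q + 2 / 3) (hγ : InU ((3 * p - 2 * q - 2) / q) q γ γ')
    {h₁ h₁' h₂ h₂' : ℝ → EuclideanSpace ℝ (Fin n)} (a b : ℝ)
    (hh₁ : InW ((3 * p - 2 * q - 2) / q) q h₁ h₁') (hh₂ : InW ((3 * p - 2 * q - 2) / q) q h₂ h₂') :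
    mengerDifferential p q γ γ' (a • h₁ + b • h₂) (a • h₁' + b • h₂') =
      a * mengerDifferential p q γ γ' h₁ h₁' + b * mengerDifferential p q γ γ' h₂ h₂' := by
  have hs := one_div_lt_exponent (by linarith) hp₁
  obtain ⟨K, hK, hKΩ, hmem⟩ := hγ.exists_isCompact_frameVector_mem hq hs
  obtain ⟨_, -, hLp⟩ := exists_lpNorm_frameVector_add_lpNorm_weightedBend_le n hq hp₁ hp₂
  obtain ⟨hframeγ, hbendγ, -⟩ := hLp γ γ' hγ.1
  obtain ⟨hframe₁, hbend₁, -⟩ := hLp h₁ h₁' hh₁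
  obtain ⟨hframe₂, hbend₂, -⟩ := hLp h₂ h₂' hh₂
  rw [mengerDifferential, frameVector_linearCombination, weightedBend_linearCombination,
    (homogeneousIntegrand_mengerDensity p hq).firstVariation_linearCombination hq hK hKΩ
      hframeγ.1 hmem hbendγ hframe₁ hbend₁ hframe₂ hbend₂,
    mengerDifferential, mengerDifferential]
  ring

theorem exists_abs_mengerDifferential_le (hq : 1 < q) (hp₁ : 2 / 3 * q + 1 < p)
    (hp₂ : p < q + 2 / 3) (hγ : InU ((3 * p - 2 * q - 2) / q) q γ γ') :
    ∃ C : ℝ, ∀ h h' : ℝ → EuclideanSpace ℝ (Fin n), InW ((3 * p - 2 * q - 2) / q) q h h' →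
      |mengerDifferential p q γ γ' h h'| ≤ C * sobNorm ((3 * p - 2 * q - 2) / q) q h h' := by
  have hs := one_div_lt_exponent (by linarith) hp₁
  obtain ⟨K, hK, hKΩ, hmem⟩ := hγ.exists_isCompact_frameVector_mem hq hs
  obtain ⟨A, _, hLp⟩ := exists_lpNorm_frameVector_add_lpNorm_weightedBend_le n hq hp₁ hp₂
  obtain ⟨-, hbendγ, -⟩ := hLp γ γ' hγ.1
  obtain ⟨C, hC, hvar⟩ := (homogeneousIntegrand_mengerDensity p hq).exists_abs_firstVariation_le
    hq hK hKΩ hmem hbendγ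
  refine ⟨6 * (C * A), fun h h' hh => ?_⟩
  obtain ⟨hframe, hbend, hle⟩ := hLp h h' hh
  rw [mengerDifferential, abs_mul, abs_of_pos (by norm_num : (0 : ℝ) < 6), mul_assoc, mul_assoc]
  gcongr
  exact (hvar _ _ hframe hbend).trans (by gcongr)

theorem exists_abs_mengerDifferential_sub_le (hq : 1 < q) (hp₁ : 2 / 3 * q + 1 < p)
    (hp₂ : p < q + 2 / 3) (hγ : InU ((3 * p - 2 * q - 2) / q) q γ γ') {ε : ℝ} (hε : 0 < ε) :
    ∃ δ : ℝ, 0 < δ ∧ ∀ η η' : ℝ → EuclideanSpace ℝ (Fin n), InW ((3 * p - 2 * q - 2) / q) q η η' →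
      sobNorm ((3 * p - 2 * q - 2) / q) q (η - γ) (η' - γ') < δ →
      ∀ h h' : ℝ → EuclideanSpace ℝ (Fin n), InW ((3 * p - 2 * q - 2) / q) q h h' →
        |mengerDifferential p q η η' h h' - mengerDifferential p q γ γ' h h'| ≤
          ε * sobNorm ((3 * p - 2 * q - 2) / q) q h h' := by
  have hs := one_div_lt_exponent (by linarith) hp₁
  have hs0 : 0 ≤ (3 * p - 2 * q - 2) / q := le_trans (by positivity) hs.le
  obtain ⟨K, hK, hKΩ, hmem⟩ := hγ.exists_isCompact_frameVector_mem hq hs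
  obtain ⟨A, hA, hLp⟩ := exists_lpNorm_frameVector_add_lpNorm_weightedBend_le n hq hp₁ hp₂
  obtain ⟨hframeγ, hbendγ, -⟩ := hLp γ γ' hγ.1
  obtain ⟨δ, hδ, hvar⟩ :=
    (homogeneousIntegrand_mengerDensity p hq).exists_abs_firstVariation_sub_le hq hK hKΩ
      hframeγ.1 hmem hbendγ (ε := ε / (6 * (A + 1))) (by positivity)
  refine ⟨δ / (A + 1), by positivity, fun η η' hη hclose h h' hh => ?_⟩
  obtain ⟨hframeη, hbendη, hleη⟩ := hLp (η - γ) (η' - γ') (hη.sub hq hs0 hγ.1)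
  obtain ⟨hframe, hbend, hle⟩ := hLp h h' hh
  have hN := sobNorm_nonneg ((3 * p - 2 * q - 2) / q) q (η - γ) (η' - γ')
  have hN' := sobNorm_nonneg ((3 * p - 2 * q - 2) / q) q h h'
  have hsmall : lpNorm (frameVector (η - γ) (η' - γ')) ∞ arcMeasure +
      lpNorm (weightedBend p q (η - γ)) (ENNReal.ofReal q) arcMeasure < δ := by
    rw [lt_div_iff₀ (by positivity)] at hclose
    linarith
  have hsub := hvar _ _ hframeη hbendη
    ((le_add_of_nonneg_right lpNorm_nonneg).trans_lt hsmall)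
    ((le_add_of_nonneg_left lpNorm_nonneg).trans_lt hsmall) _ _ hframe hbend
  rw [frameVector_sub, weightedBend_sub, add_sub_cancel, add_sub_cancel] at hsub
  calc |mengerDifferential p q η η' h h' - mengerDifferential p q γ γ' h h'|
      ≤ 6 * (ε / (6 * (A + 1)) * (A * sobNorm ((3 * p - 2 * q - 2) / q) q h h')) := by
        rw [mengerDifferential, mengerDifferential, ← mul_sub, abs_mul,
          abs_of_pos (by norm_num : (0 : ℝ) < 6)]
        gcongr
        exact hsub.trans (by gcongr)
    _ = ε * sobNorm ((3 * p - 2 * q - 2) / q) q h h' * (A / (A + 1)) := by field_simp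
    _ ≤ ε * sobNorm ((3 * p - 2 * q - 2) / q) q h h' :=
        mul_le_of_le_one_right (by positivity) ((div_le_one (by positivity)).2 (by linarith))

end Differential

/-- **`E_{p,q}` is `C¹` on regular embedded `W^{(3p-2)/q-1,q}`-curves.**
In the sub-critical range: the set `U` of injective regular curves is open
in `W`, the energy is Gâteaux differentiable on `U` with differential a
bounded linear functional on `W`, and the differential depends continuously
(in the dual norm) on the curve. -/
theorem energy_C1 (n : ℕ) (p q : ℝ)
    (hq : 1 < q) (hp₁ : 2/3 * q + 1 < p) (hp₂ : p < q + 2/3) :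
    -- `U` is open in `W`
    (∀ γ γ' : ℝ → EuclideanSpace ℝ (Fin n), InU ((3*p-2*q-2)/q) q γ γ' →
      ∃ ε : ℝ, 0 < ε ∧ ∀ η η' : ℝ → EuclideanSpace ℝ (Fin n),
        InW ((3*p-2*q-2)/q) q η η' →
        sobNorm ((3*p-2*q-2)/q) q (fun u => η u - γ u) (fun u => η' u - γ' u) < ε →
        InU ((3*p-2*q-2)/q) q η η') ∧
    -- Gâteaux differentiability, boundedness and continuity of the differential
    (∃ DE : (ℝ → EuclideanSpace ℝ (Fin n)) → (ℝ → EuclideanSpace ℝ (Fin n)) →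
        (ℝ → EuclideanSpace ℝ (Fin n)) → (ℝ → EuclideanSpace ℝ (Fin n)) → ℝ,
      ∀ γ γ' : ℝ → EuclideanSpace ℝ (Fin n), InU ((3*p-2*q-2)/q) q γ γ' →
        -- the Gâteaux derivative exists and equals `DE γ γ' · ·`
        (∀ h h' : ℝ → EuclideanSpace ℝ (Fin n), InW ((3*p-2*q-2)/q) q h h' →
          Tendsto (fun τ : ℝ =>
              ((menger p q (fun u => γ u + τ • h u) (fun u => γ' u + τ • h' u)).toReal
                - (menger p q γ γ').toReal) / τ)
            (𝓝[≠] (0:ℝ)) (𝓝 (DE γ γ' h h'))) ∧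
        -- linearity in the direction
        (∀ h₁ h₁' h₂ h₂' : ℝ → EuclideanSpace ℝ (Fin n), ∀ a b : ℝ,
          InW ((3*p-2*q-2)/q) q h₁ h₁' → InW ((3*p-2*q-2)/q) q h₂ h₂' →
          DE γ γ' (a • h₁ + b • h₂) (a • h₁' + b • h₂') =
            a * DE γ γ' h₁ h₁' + b * DE γ γ' h₂ h₂') ∧
        -- boundedness on `W`
        (∃ C : ℝ, ∀ h h' : ℝ → EuclideanSpace ℝ (Fin n),
          InW ((3*p-2*q-2)/q) q h h' →
          |DE γ γ' h h'| ≤ C * sobNorm ((3*p-2*q-2)/q) q h h') ∧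
        -- continuity of `γ ↦ DE γ γ'` from `U` to `W*`
        (∀ ε : ℝ, 0 < ε → ∃ δ : ℝ, 0 < δ ∧
          ∀ η η' : ℝ → EuclideanSpace ℝ (Fin n), InU ((3*p-2*q-2)/q) q η η' →
            sobNorm ((3*p-2*q-2)/q) q (fun u => η u - γ u) (fun u => η' u - γ' u) < δ →
            ∀ h h' : ℝ → EuclideanSpace ℝ (Fin n), InW ((3*p-2*q-2)/q) q h h' →
              sobNorm ((3*p-2*q-2)/q) q h h' ≤ 1 →
              |DE η η' h h' - DE γ γ' h h'| ≤ ε)) := by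
  refine ⟨fun γ γ' hγ => ?_, mengerDifferential p q, fun γ γ' hγ =>
    ⟨fun h h' hh => tendsto_menger_slope hq hp₁ hp₂ hγ hh,
      fun _ _ _ _ a b hh₁ hh₂ => mengerDifferential_linearCombination hq hp₁ hp₂ hγ a b hh₁ hh₂,
      exists_abs_mengerDifferential_le hq hp₁ hp₂ hγ, fun ε hε => ?_⟩⟩
  · have hs := one_div_lt_exponent (by linarith) hp₁
    have hs0 : 0 ≤ (3 * p - 2 * q - 2) / q := le_trans (by positivity) hs.le
    obtain ⟨ε, c, hε, hc, hchord⟩ := hγ.exists_uniform_chordLowerBound hq hs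
    exact ⟨ε, hε, fun η η' hη hclose => (hchord η η' hη hclose).inU hc hq hs0 hη⟩
  · obtain ⟨δ, hδ, hdiff⟩ := exists_abs_mengerDifferential_sub_le hq hp₁ hp₂ hγ hε
    exact ⟨δ, hδ, fun η η' hη hclose h h' hh hh1 =>
      (hdiff η η' hη.1 hclose h h' hh).trans (mul_le_of_le_one_right hε.le hh1)⟩
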